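/- arXiv:2301.11352 — 2 statements merged into one kernel-verified Lean document; each statement's English description precedes it below -/
import Mathlib

section
/- Let $d\geq 5$. For integers $j\geq 0$ let $q_j=\mathrm{lcm}\{1,2,\dots,2^j\}$ and for integers $j,k$ with $2^j\le k$ let $\Omega_{j,k}=\{\alpha\in\mathbb{T}^d:\alpha\in[-2^{j-k},2^{j-k}]^d+(q_j^{-1}\mathbb{Z})^d\}$. Then there is a constant $C_d$ such that for every $k\in\mathbb{N}$, every integer $j$ with $1\le j\le\log_2(k)-2$, and every $f\in\ell^2(\mathbb{Z}^d)$ whose Fourier transform is supported in the complement $\Omega_{j,k}^c$, one has $\bigl\|\sup_{2^k\le\lambda\le 2^{k+1},\ \lambda^2\in\mathbb{N}}|A_\lambda f|\bigr\|_{\ell^2(\mathbb{Z}^d)}\le C_d\,2^{-j/2}j^{-1}\,\|f\|_{\ell^2(\mathbb{Z}^d)}$. -/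
open scoped BigOperators ENNReal Real

noncomputable section

/-- Squared Euclidean norm of a lattice point, as a real number. -/
def nsq {d : ℕ} (m : Fin d → ℤ) : ℝ := ∑ i, ((m i : ℝ)) ^ 2

/-- The discrete sphere of radius `lam` in `ℤ^d`. -/
def sph (d : ℕ) (lam : ℝ) : Set (Fin d → ℤ) := {m | nsq m = lam ^ 2}

/-- `N_lam`: the number of lattice points on the sphere of radius `lam`. -/
def Nlam (d : ℕ) (lam : ℝ) : ℕ := Nat.card (sph d lam)

/-- The discrete spherical average. -/
def Avg {d : ℕ} (lam : ℝ) (f : (Fin d → ℤ) → ℝ) (n : Fin d → ℤ) : ℝ :=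
  (Nlam d lam : ℝ)⁻¹ * ∑' m : sph d lam, f (n - (m : Fin d → ℤ))

/-- The `ℓ²(ℤ^d)` norm, valued in `ℝ≥0∞`. -/
def l2norm {d : ℕ} (f : (Fin d → ℤ) → ℝ) : ℝ≥0∞ :=
  (∑' n : Fin d → ℤ, (‖f n‖₊ : ℝ≥0∞) ^ 2) ^ ((1 : ℝ) / 2)

/-- `q_j = lcm{1,2,…,2^j}`. -/
def qlcm (j : ℕ) : ℕ := (Finset.Icc 1 (2 ^ j)).lcm id

/-- `Ω_{j,k} = [-2^{j-k}, 2^{j-k}]^d + (q_j⁻¹ ℤ)^d`, viewed as the (ℤ^d-periodic)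
set of representatives in `ℝ^d` of the corresponding subset of `𝕋^d`. -/
def OmegaJK (d j k : ℕ) : Set (Fin d → ℝ) :=
  {α | ∃ ℓ : Fin d → ℤ, ∀ i, |α i - (ℓ i : ℝ) / (qlcm j : ℝ)| ≤ (2 : ℝ) ^ ((j : ℤ) - (k : ℤ))}

/-!
Write `N = 2 ^ k`. The sum of `f` over the lattice sphere of squared radius
`l` around `n` is `exp (2πl/N²)` times the `l`-th Fourier coefficient in `t` of the convolution at
`n` of `f` with the Gaussian weight `exp (-2π(N⁻² - it)|m|²)`. Since a sphere of radius `λ` carries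
at least about `λ ^ (d - 2)` points, every `|A_λ f(n)|` with `N ≤ λ ≤ 2N` is at most
`O(N ^ (2 - d))` times the integral over `t ∈ [0, 1]` of the absolute value of this convolution,
which does not depend on `λ`, and the supremum disappears.

By a weighted Cauchy–Schwarz inequality in `t` and Plancherel in `n`, it remains to integrate over
`t` the supremum over `α ∉ Ω_{j,k}` of the Fourier transform of the Gaussian weight, which is a
product of `d` theta series. Near `t = a/q` the modular transformation of each series gives a factor
`q ^ (-1/2)` from a quadratic Gauss sum and Gaussian decay in the distance of the coordinate of `α`
to `q⁻¹ℤ`. If `q ∣ q_j`, then some coordinate is far from `q⁻¹ℤ`, which gains `2 ^ (-j)`. Otherwise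
a prime power exceeding `2 ^ j` divides `q`, and by Chebyshev's bound for primes the sum of
`q ^ (-3/2)` over these `q` is `O(2 ^ (-j/2) / j)`.
-/

section TwoSquares

open ArithmeticFunction

/-- The Gaussian integers of norm `n`, that is, the representations of `n` as an ordered sum of
two squares. -/
def gaussianSphere (n : ℤ) : Set GaussianInt := {z | z.norm = n}

/-- The divisor sum `n ↦ ∑_{m ∣ n} χ₄(m)`, a quarter of the number of representations of `n ≥ 1`
as a sum of two squares. -/
def chiFourDivisorSum : ArithmeticFunction ℤ :=
  toArithmeticFunction (ZMod.χ₄ ·) * (zeta : ArithmeticFunction ℤ)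

lemma sq_add_sq_eq_of_mem_gaussianSphere {n : ℤ} {z : GaussianInt} (hz : z ∈ gaussianSphere n) :
    z.re ^ 2 + z.im ^ 2 = n := by
  have hnorm : z.norm = n := hz
  rw [← hnorm, Zsqrtd.norm_def]
  ring

lemma finite_gaussianSphere (n : ℤ) : (gaussianSphere n).Finite := by
  refine Set.Finite.of_finite_image (f := fun z ↦ (z.re, z.im))
    (((Set.finite_Icc (-n) n).prod (Set.finite_Icc (-n) n)).subset ?_)
    fun z _ w _ h ↦ Zsqrtd.ext (congrArg Prod.fst h) (congrArg Prod.snd h)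
  rintro _ ⟨z, hz, rfl⟩
  have hsq := sq_add_sq_eq_of_mem_gaussianSphere hz
  have hre : |z.re| ≤ n := by nlinarith [Int.le_self_sq |z.re|, sq_abs z.re, sq_nonneg z.im]
  have him : |z.im| ≤ n := by nlinarith [Int.le_self_sq |z.im|, sq_abs z.im, sq_nonneg z.re]
  exact ⟨abs_le.1 hre, abs_le.1 him⟩

lemma chiFourDivisorSum_apply (n : ℕ) :
    chiFourDivisorSum n = ∑ p ∈ n.divisorsAntidiagonal, ZMod.χ₄ p.1 := by
  rw [Nat.sum_divisorsAntidiagonal (fun d _ ↦ ZMod.χ₄ d), chiFourDivisorSum, coe_mul_zeta_apply]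
  exact Finset.sum_congr rfl fun m hm ↦ if_neg (Nat.pos_of_mem_divisors hm).ne'

lemma isMultiplicative_chiFourDivisorSum : chiFourDivisorSum.IsMultiplicative :=
  (DirichletCharacter.isMultiplicative_toArithmeticFunction ZMod.χ₄).mul
    isMultiplicative_zeta.natCast

lemma chiFourDivisorSum_prime_pow {p : ℕ} (hp : p.Prime) (e : ℕ) :
    chiFourDivisorSum (p ^ e) = ∑ i ∈ Finset.range (e + 1), ZMod.χ₄ p ^ i := by
  rw [chiFourDivisorSum_apply, Nat.sum_divisorsAntidiagonal (fun d _ ↦ ZMod.χ₄ d),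
    Nat.sum_divisors_prime_pow hp]
  simp only [Nat.cast_pow, map_pow]

lemma gaussianInt_prime_of_norm_prime {p : ℕ} (hp : p.Prime) {z : GaussianInt} (hz : z.norm = p) :
    Prime z := by
  refine Irreducible.prime ⟨?_, fun a b hab ↦ ?_⟩
  · rw [← Zsqrtd.norm_eq_one_iff, hz]
    exact hp.one_lt.ne'
  · have hmul : a.norm.natAbs * b.norm.natAbs = p := by
      rw [← Int.natAbs_mul, ← Zsqrtd.norm_mul, ← hab, hz, Int.natAbs_natCast]
    rw [← Zsqrtd.norm_eq_one_iff, ← Zsqrtd.norm_eq_one_iff]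
    exact (Nat.prime_mul_iff.1 (hmul ▸ hp)).symm.imp And.right And.right

lemma not_dvd_star_of_norm_odd_prime {p : ℕ} (hp : p.Prime) (hodd : Odd p) {z : GaussianInt}
    (hz : z.norm = p) : ¬ z ∣ star z := by
  intro hdvd
  have hsum : z + star z = ((2 * z.re : ℤ) : GaussianInt) := by
    ext <;> simp [two_mul]
  have hnorm : (p : ℤ) ∣ (2 * z.re) * (2 * z.re) := by
    rw [← hz, ← Zsqrtd.norm_intCast, ← hsum]
    exact map_dvd Zsqrtd.normMonoidHom (dvd_add dvd_rfl hdvd)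
  have hp' : Prime (p : ℤ) := Nat.prime_iff_prime_int.1 hp
  have hsq := sq_add_sq_eq_of_mem_gaussianSphere hz
  obtain ⟨x, hx⟩ : (p : ℤ) ∣ z.re := by
    rcases hp'.dvd_or_dvd ((or_self_iff).1 (hp'.dvd_or_dvd hnorm)) with h2 | h
    · have : p ∣ 2 := by exact_mod_cast h2
      obtain rfl := (Nat.prime_dvd_prime_iff_eq hp Nat.prime_two).1 this
      exact absurd hodd (by decide)
    · exact h
  obtain ⟨y, hy⟩ : (p : ℤ) ∣ z.im :=
    hp'.dvd_of_dvd_pow (n := 2) ⟨1 - p * x ^ 2, by rw [hx] at hsq; linear_combination hsq⟩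
  have hone : (p : ℤ) * (x ^ 2 + y ^ 2) = 1 :=
    mul_left_cancel₀ hp'.ne_zero (by rw [hx, hy] at hsq; linear_combination hsq)
  exact hp'.not_isUnit (IsUnit.of_mul_eq_one _ hone)

lemma mul_prime_pow_mul_pow_ne {R : Type*} [CommRing R] [IsDomain R] {a b x : R} (ha : Prime a)
    (hb : b ≠ 0) (hab : ¬ a ∣ b) (hx : ¬ a ∣ x) (y : R) {i j e : ℕ} (hij : i < j) (hje : j ≤ e) :
    x * a ^ i * b ^ (e - i) ≠ y * a ^ j * b ^ (e - j) := by
  intro h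
  obtain ⟨k, rfl⟩ := Nat.exists_eq_add_of_lt hij
  rw [show e - i = (k + 1) + (e - (i + k + 1)) by omega] at h
  have hcancel : x * b ^ (k + 1) = a * (y * a ^ k) :=
    mul_left_cancel₀ (mul_ne_zero (pow_ne_zero i ha.ne_zero) (pow_ne_zero (e - (i + k + 1)) hb))
      (by linear_combination h)
  rcases ha.dvd_or_dvd (Dvd.intro _ hcancel.symm) with hdvd | hdvd
  · exact hx hdvd
  · exact hab (ha.dvd_of_dvd_pow hdvd)

lemma injOn_mul_prime_pow_mul_pow {R : Type*} [CommRing R] [IsDomain R] {a b : R} (ha : Prime a)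
    (hb : b ≠ 0) (hab : ¬ a ∣ b) (e : ℕ) :
    Set.InjOn (fun x : ℕ × R ↦ x.2 * a ^ x.1 * b ^ (e - x.1)) (Set.Iic e ×ˢ {x | ¬ a ∣ x}) := by
  rintro ⟨i, x⟩ ⟨hi : i ≤ e, hx⟩ ⟨j, y⟩ ⟨hj : j ≤ e, hy⟩
    (h : x * a ^ i * b ^ (e - i) = y * a ^ j * b ^ (e - j))
  rcases lt_trichotomy i j with hij | rfl | hij
  · exact absurd h (mul_prime_pow_mul_pow_ne ha hb hab hx y hij hj)
  · rw [mul_right_cancel₀ (pow_ne_zero i ha.ne_zero)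
      (mul_right_cancel₀ (pow_ne_zero (e - i) hb) h)]
  · exact absurd h.symm (mul_prime_pow_mul_pow_ne ha hb hab hy x hij hi)

lemma succ_mul_ncard_gaussianSphere_le {p : ℕ} (hp : p.Prime) (hp1 : p % 4 = 1) (e : ℕ) {w : ℕ}
    (hw : ¬ p ∣ w) :
    (e + 1) * (gaussianSphere w).ncard ≤ (gaussianSphere (p ^ e * w : ℕ)).ncard := by
  have := Fact.mk hp
  obtain ⟨a, b, hab⟩ := Nat.Prime.sq_add_sq (p := p) (by omega)
  let ϖ : GaussianInt := ⟨a, b⟩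
  have hnorm : ϖ.norm = p := by rw [← hab, Zsqrtd.norm_def]; push_cast; ring
  have hnorm' : (star ϖ).norm = p := by rw [Zsqrtd.norm_conj, hnorm]
  have hprime : Prime ϖ := gaussianInt_prime_of_norm_prime hp hnorm
  have hinj := injOn_mul_prime_pow_mul_pow hprime
    (gaussianInt_prime_of_norm_prime hp hnorm').ne_zero
    (not_dvd_star_of_norm_odd_prime hp (Nat.odd_iff.2 (by omega)) hnorm) e
  have hndvd : gaussianSphere w ⊆ {z | ¬ ϖ ∣ z} := by
    intro z (hz : z.norm = w) hdvd
    have hdvd : ϖ.norm ∣ z.norm := map_dvd Zsqrtd.normMonoidHom hdvd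
    rw [hnorm, hz] at hdvd
    exact hw (by exact_mod_cast hdvd)
  rw [← Set.ncard_Iic_nat e, ← Set.ncard_prod]
  refine Set.ncard_le_ncard_of_injOn _ ?_ (hinj.mono (Set.prod_mono_right hndvd))
    (finite_gaussianSphere _)
  rintro ⟨i, z⟩ ⟨hi : i ≤ e, hz : z.norm = w⟩
  change Zsqrtd.normMonoidHom _ = _
  rw [map_mul, map_mul, map_pow, map_pow]
  change z.norm * ϖ.norm ^ i * (star ϖ).norm ^ (e - i) = _
  rw [hnorm, hnorm', hz, mul_assoc, ← pow_add, Nat.add_sub_cancel' hi]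
  push_cast
  ring

lemma ncard_gaussianSphere_le_sq_mul {c : ℕ} (hc : c ≠ 0) (w : ℤ) :
    (gaussianSphere w).ncard ≤ (gaussianSphere (c ^ 2 * w)).ncard := by
  refine Set.ncard_le_ncard_of_injOn (fun z ↦ c * z) (fun z hz ↦ ?_) (fun z _ z' _ h ↦ ?_)
    (finite_gaussianSphere _)
  · change (c * z).norm = _
    rw [Zsqrtd.norm_mul, Zsqrtd.norm_natCast, show z.norm = w from hz, sq]
  · exact mul_left_cancel₀ (Nat.cast_ne_zero.2 hc) h

lemma four_le_ncard_gaussianSphere_one : 4 ≤ (gaussianSphere 1).ncard := by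
  have hsub : (({⟨1, 0⟩, ⟨-1, 0⟩, ⟨0, 1⟩, ⟨0, -1⟩} : Finset GaussianInt) : Set GaussianInt) ⊆
      gaussianSphere 1 := by
    intro z hz
    simp only [Finset.mem_coe, Finset.mem_insert, Finset.mem_singleton] at hz
    rcases hz with rfl | rfl | rfl | rfl <;> rfl
  calc 4 = ({⟨1, 0⟩, ⟨-1, 0⟩, ⟨0, 1⟩, ⟨0, -1⟩} : Finset GaussianInt).card := by decide
    _ ≤ (gaussianSphere 1).ncard := by
      rw [← Set.ncard_coe_finset]
      exact Set.ncard_le_ncard hsub (finite_gaussianSphere 1)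

lemma four_mul_chiFourDivisorSum_prime_pow_mul {p : ℕ} (hp : p.Prime) (hodd : Odd p) (e : ℕ)
    {w : ℕ} (hpw : ¬ p ∣ w) (hw : 0 ≤ chiFourDivisorSum w ∧
      4 * chiFourDivisorSum w ≤ (gaussianSphere w).ncard) :
    0 ≤ chiFourDivisorSum (p ^ e * w) ∧
      4 * chiFourDivisorSum (p ^ e * w) ≤ (gaussianSphere (p ^ e * w : ℕ)).ncard := by
  rw [isMultiplicative_chiFourDivisorSum.map_mul_of_coprime
    (((hp.coprime_iff_not_dvd).2 hpw).pow_left e), chiFourDivisorSum_prime_pow hp]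
  rcases Nat.odd_mod_four_iff.1 (Nat.odd_iff.1 hodd) with hp4 | hp4
  · have hcard : ((e + 1 : ℕ) : ℤ) * (gaussianSphere w).ncard ≤
        (gaussianSphere (p ^ e * w : ℕ)).ncard :=
      mod_cast succ_mul_ncard_gaussianSphere_le hp hp4 e hpw
    simp only [ZMod.χ₄_nat_one_mod_four hp4, one_pow, Finset.sum_const, Finset.card_range,
      nsmul_eq_mul, mul_one]
    exact ⟨mul_nonneg (Nat.cast_nonneg _) hw.1, by nlinarith [hw.2]⟩
  · rw [ZMod.χ₄_nat_three_mod_four hp4, neg_one_geom_sum]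
    split_ifs with heven
    · simp
    · obtain ⟨c, rfl⟩ : Even e := by simpa only [Nat.even_add_one, not_not] using heven
      have hcard := ncard_gaussianSphere_le_sq_mul (pow_ne_zero c hp.ne_zero) w
      rw [show (((p ^ c : ℕ) : ℤ) ^ 2 * w) = ((p ^ (c + c) * w : ℕ) : ℤ) by push_cast; ring]
        at hcard
      exact ⟨by linarith [hw.1], by linarith [hw.2, (Int.ofNat_le).2 hcard]⟩

lemma four_mul_chiFourDivisorSum_le_ncard {n : ℕ} (hn : Odd n) :
    0 ≤ chiFourDivisorSum n ∧ 4 * chiFourDivisorSum n ≤ (gaussianSphere n).ncard := by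
  induction n using Nat.strong_induction_on with
  | _ n ih =>
    obtain rfl | hn1 := eq_or_ne n 1
    · rw [isMultiplicative_chiFourDivisorSum.map_one]
      exact ⟨zero_le_one, mod_cast four_le_ncard_gaussianSphere_one⟩
    · have hp := Nat.minFac_prime hn1
      obtain ⟨e, w, hpw, hfactor⟩ :=
        Nat.exists_eq_pow_mul_and_not_dvd hn.pos.ne' n.minFac hp.ne_one
      have hodd : Odd n.minFac := hn.of_dvd_nat n.minFac_dvd
      have hw : Odd w := hn.of_dvd_nat (Dvd.intro_left _ hfactor.symm)
      have he : e ≠ 0 := by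
        rintro rfl
        rw [pow_zero, one_mul] at hfactor
        exact hpw (hfactor ▸ n.minFac_dvd)
      have hlt : w < n := by
        conv_rhs => rw [hfactor]
        exact lt_mul_of_one_lt_left hw.pos (Nat.one_lt_pow he hp.one_lt)
      have hstep := four_mul_chiFourDivisorSum_prime_pow_mul hp hodd e hpw (ih w hlt hw)
      rwa [← hfactor] at hstep

end TwoSquares

section FourSquares

open Finset

/-- The quadruples `((a, b), (c, e))` of odd natural numbers with `a * b + c * e = 2 * u`. -/
def oddQuadruples (u : ℕ) : Finset ((ℕ × ℕ) × ℕ × ℕ) :=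
  ((antidiagonal (2 * u)).filter (Odd ·.1)).biUnion fun m ↦
    m.1.divisorsAntidiagonal ×ˢ m.2.divisorsAntidiagonal

/-- Writing `a = (v + 1) * (r + s) + r` and `c = v * (r + s) + r`, the map exchanging `(r, s)` with
`(b, e)`, which preserves `a * b + c * e`. -/
def quadrupleExchange (p : (ℕ × ℕ) × ℕ × ℕ) : (ℕ × ℕ) × ℕ × ℕ :=
  let g := p.1.1 - p.2.1
  let h := p.1.2 + p.2.2
  ((p.1.1 / g * h + p.1.2, p.1.1 % g), ((p.1.1 / g - 1) * h + p.1.2, g - p.1.1 % g))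

lemma mem_oddQuadruples {u a b c e : ℕ} :
    ((a, b), (c, e)) ∈ oddQuadruples u ↔
      a * b + c * e = 2 * u ∧ Odd a ∧ Odd b ∧ Odd c ∧ Odd e := by
  simp only [oddQuadruples, mem_biUnion, mem_filter, HasAntidiagonal.mem_antidiagonal,
    mem_product, Nat.mem_divisorsAntidiagonal, Prod.exists]
  constructor
  · rintro ⟨m, n, ⟨hsum, hm⟩, ⟨rfl, -⟩, rfl, -⟩
    have hn : Odd (c * e) := by rw [Nat.odd_iff] at hm ⊢; omega
    exact ⟨hsum, (Nat.odd_mul.1 hm).1, (Nat.odd_mul.1 hm).2, (Nat.odd_mul.1 hn).1,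
      (Nat.odd_mul.1 hn).2⟩
  · rintro ⟨hsum, ha, hb, hc, he⟩
    exact ⟨a * b, c * e, ⟨hsum, ha.mul hb⟩, ⟨rfl, (ha.mul hb).pos.ne'⟩, rfl, (hc.mul he).pos.ne'⟩

lemma sum_chiFourDivisorSum_mul (u : ℕ) :
    ∑ m ∈ (antidiagonal (2 * u)).filter (Odd ·.1), chiFourDivisorSum m.1 * chiFourDivisorSum m.2 =
      ∑ p ∈ oddQuadruples u, ZMod.χ₄ p.1.1 * ZMod.χ₄ p.2.1 := by
  rw [oddQuadruples, sum_biUnion]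
  · simp only [chiFourDivisorSum_apply, sum_mul_sum, sum_product]
  · intro m _ n _ hmn
    refine disjoint_left.2 fun p hpm hpn ↦ hmn ?_
    simp only [mem_product, Nat.mem_divisorsAntidiagonal] at hpm hpn
    exact Prod.ext (hpm.1.1.symm.trans hpn.1.1) (hpm.2.1.symm.trans hpn.2.1)

lemma chiFour_add_two_mul_mul {c : ℕ} (hc : Odd c) (m : ℕ) :
    ZMod.χ₄ (c + 2 * m : ℕ) * ZMod.χ₄ c = (-1) ^ m := by
  have hc2 := Nat.odd_iff.1 hc
  rw [ZMod.χ₄_eq_neg_one_pow (by omega), ZMod.χ₄_eq_neg_one_pow hc2, ← pow_add,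
    show (c + 2 * m) / 2 + c / 2 = m + (c / 2 + c / 2) by omega, pow_add,
    Even.neg_one_pow ⟨_, rfl⟩, mul_one]

lemma exists_quadruple_coordinates {a c : ℕ} (ha : Odd a) (hc : Odd c) (hca : c < a) :
    ∃ v r s, Odd r ∧ Odd s ∧ a = (v + 1) * (r + s) + r ∧ c = v * (r + s) + r := by
  have heven : Even (a - c) := Nat.Odd.sub_odd ha hc
  have hdiv := Nat.div_add_mod a (a - c)
  have hlt := Nat.mod_lt a (Nat.sub_pos_of_lt hca)
  have hr : Odd (a % (a - c)) := by
    rw [← hdiv] at ha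
    exact (Nat.odd_add'.1 ha).2 (heven.mul_right _)
  obtain ⟨v, hv⟩ : ∃ v, a / (a - c) = v + 1 :=
    Nat.exists_eq_succ_of_ne_zero (Nat.div_pos (Nat.sub_le a c) (Nat.sub_pos_of_lt hca)).ne'
  refine ⟨v, a % (a - c), (a - c) - a % (a - c), hr, Nat.Even.sub_odd hlt.le heven hr, ?_, ?_⟩
  all_goals
    rw [Nat.add_sub_cancel' hlt.le]
    rw [hv] at hdiv
    linarith [Nat.sub_add_cancel hca.le]

lemma quadrupleExchange_apply {v r s b e : ℕ} (hs : 0 < s) :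
    quadrupleExchange (((v + 1) * (r + s) + r, b), (v * (r + s) + r, e)) =
      (((v + 1) * (b + e) + b, r), (v * (b + e) + b, s)) := by
  have hsub : (v + 1) * (r + s) + r - (v * (r + s) + r) = r + s := by
    rw [Nat.sub_eq_of_eq_add]; ring
  have hdiv : ((v + 1) * (r + s) + r) / (r + s) = v + 1 := by
    rw [Nat.mul_comm, Nat.mul_add_div (by omega), Nat.div_eq_of_lt (by omega), add_zero]
  have hmod : ((v + 1) * (r + s) + r) % (r + s) = r := Nat.mul_add_mod_of_lt (by omega)
  simp only [quadrupleExchange, hsub, hdiv, hmod, Nat.add_sub_cancel, Nat.add_sub_cancel_left]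

lemma exists_coordinates_of_mem_oddQuadruples {u : ℕ} {p : (ℕ × ℕ) × ℕ × ℕ}
    (hp : p ∈ oddQuadruples u) (hlt : p.2.1 < p.1.1) :
    ∃ v r s b e, Odd r ∧ Odd s ∧ Odd b ∧ Odd e ∧
      v * (r + s) * (b + e) + (r + s) * b + (b + e) * r = 2 * u ∧
      p = (((v + 1) * (r + s) + r, b), (v * (r + s) + r, e)) := by
  obtain ⟨⟨a, b⟩, c, e⟩ := p
  obtain ⟨hsum, ha, hb, hc, he⟩ := mem_oddQuadruples.1 hp
  obtain ⟨v, r, s, hr, hs, rfl, rfl⟩ := exists_quadruple_coordinates ha hc hlt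
  exact ⟨v, r, s, b, e, hr, hs, hb, he, by rw [← hsum]; ring, rfl⟩

lemma chiFour_mul_add_chiFour_mul_quadrupleExchange {u v r s b e : ℕ} (hu : Odd u) (hr : Odd r)
    (hs : Odd s) (hb : Odd b) (he : Odd e)
    (hsum : v * (r + s) * (b + e) + (r + s) * b + (b + e) * r = 2 * u) :
    ZMod.χ₄ ((v + 1) * (r + s) + r : ℕ) * ZMod.χ₄ (v * (r + s) + r : ℕ) +
      ZMod.χ₄ ((v + 1) * (b + e) + b : ℕ) * ZMod.χ₄ (v * (b + e) + b : ℕ) = 0 := by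
  obtain ⟨m, hm⟩ := even_iff_exists_two_mul.1 (hr.add_odd hs)
  obtain ⟨n, hn⟩ := even_iff_exists_two_mul.1 (hb.add_odd he)
  rw [hm, hn] at hsum ⊢
  have huv : u = 2 * (v * m * n) + (m * b + n * r) := by linarith
  have hodd : Odd (m + n) := by
    have hmn : Odd (m * b + n * r) := (Nat.odd_add'.1 (huv ▸ hu)).2 (even_two_mul _)
    simpa only [Nat.odd_add, Nat.odd_mul, Nat.even_mul, hb, hr, and_true,
      Nat.not_even_iff_odd.2 hr, or_false] using hmn
  have hc (x y : ℕ) (hx : Odd x) : Odd (v * (2 * y) + x) :=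
    (even_two_mul y).mul_left v |>.add_odd hx
  rw [show (v + 1) * (2 * m) + r = v * (2 * m) + r + 2 * m by ring,
    show (v + 1) * (2 * n) + b = v * (2 * n) + b + 2 * n by ring,
    chiFour_add_two_mul_mul (hc r m hr), chiFour_add_two_mul_mul (hc b n hb)]
  have hprod : (-1 : ℤ) ^ m * (-1) ^ n = -1 := by rw [← pow_add, hodd.neg_one_pow]
  rcases neg_one_pow_eq_or ℤ m with h | h <;> rw [h] at hprod ⊢ <;> linarith

lemma sum_oddQuadruples_snd_lt_fst {u : ℕ} (hu : Odd u) :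
    ∑ p ∈ oddQuadruples u with p.2.1 < p.1.1, ZMod.χ₄ p.1.1 * ZMod.χ₄ p.2.1 = 0 := by
  have hadd : ∀ p ∈ (oddQuadruples u).filter (fun p ↦ p.2.1 < p.1.1),
      ZMod.χ₄ p.1.1 * ZMod.χ₄ p.2.1 +
        ZMod.χ₄ (quadrupleExchange p).1.1 * ZMod.χ₄ (quadrupleExchange p).2.1 = 0 := by
    intro p hp
    obtain ⟨v, r, s, b, e, hr, hs, hb, he, hsum, rfl⟩ :=
      exists_coordinates_of_mem_oddQuadruples (mem_filter.1 hp).1 (mem_filter.1 hp).2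
    rw [quadrupleExchange_apply hs.pos]
    exact chiFour_mul_add_chiFour_mul_quadrupleExchange hu hr hs hb he hsum
  refine sum_involution (fun p _ ↦ quadrupleExchange p) hadd (fun p hp hne heq ↦ hne ?_)
    (fun p hp ↦ ?_) (fun p hp ↦ ?_)
  · have := hadd p hp
    rw [heq] at this
    linarith
  all_goals
    obtain ⟨v, r, s, b, e, hr, hs, hb, he, hsum, rfl⟩ :=
      exists_coordinates_of_mem_oddQuadruples (mem_filter.1 hp).1 (mem_filter.1 hp).2
  · rw [quadrupleExchange_apply hs.pos, mem_filter, mem_oddQuadruples]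
    have hbe := hb.add_odd he
    exact ⟨⟨by rw [← hsum]; ring, (hbe.mul_left _).add_odd hb, hr, (hbe.mul_left _).add_odd hb, hs⟩,
      by dsimp only; linarith [hb.pos]⟩
  · rw [quadrupleExchange_apply hs.pos, quadrupleExchange_apply he.pos]

lemma sum_oddQuadruples_fst_lt_snd {u : ℕ} (hu : Odd u) :
    ∑ p ∈ oddQuadruples u with p.1.1 < p.2.1, ZMod.χ₄ p.1.1 * ZMod.χ₄ p.2.1 = 0 := by
  rw [← sum_oddQuadruples_snd_lt_fst hu]
  refine sum_nbij' Prod.swap Prod.swap ?_ ?_ (fun _ _ ↦ rfl) (fun _ _ ↦ rfl)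
    fun _ _ ↦ mul_comm _ _
  all_goals
    rintro ⟨⟨a, b⟩, c, e⟩ hp
    rw [mem_filter, mem_oddQuadruples] at hp
    obtain ⟨⟨hsum, ha, hb, hc, he⟩, hlt⟩ := hp
    exact mem_filter.2 ⟨mem_oddQuadruples.2 ⟨by rw [← hsum, add_comm], hc, he, ha, hb⟩, hlt⟩

lemma le_sum_oddQuadruples_fst_eq_snd (u : ℕ) :
    (u : ℤ) ≤ ∑ p ∈ oddQuadruples u with p.1.1 = p.2.1, ZMod.χ₄ p.1.1 * ZMod.χ₄ p.2.1 := by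
  have hone : ∀ p ∈ (oddQuadruples u).filter (fun p ↦ p.1.1 = p.2.1),
      ZMod.χ₄ p.1.1 * ZMod.χ₄ p.2.1 = 1 := by
    rintro ⟨⟨a, b⟩, c, e⟩ hp
    rw [mem_filter, mem_oddQuadruples] at hp
    obtain ⟨⟨-, ha, -⟩, rfl : a = c⟩ := hp
    simpa using chiFour_add_two_mul_mul ha 0
  rw [sum_congr rfl hone, sum_const, nsmul_one, Nat.cast_le]
  conv_lhs => rw [← card_range u]
  refine card_le_card_of_injOn (fun i ↦ ((1, 2 * i + 1), (1, 2 * (u - 1 - i) + 1)))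
    (fun i hi ↦ ?_) fun i _ j _ hij ↦ by simpa using congrArg (·.1.2) hij
  have := mem_range.1 hi
  exact mem_filter.2 ⟨mem_oddQuadruples.2 ⟨by omega, odd_one, odd_two_mul_add_one _, odd_one,
    odd_two_mul_add_one _⟩, rfl⟩

theorem le_sum_chiFourDivisorSum_mul {u : ℕ} (hu : Odd u) :
    (u : ℤ) ≤ ∑ m ∈ antidiagonal (2 * u) with Odd m.1,
      chiFourDivisorSum m.1 * chiFourDivisorSum m.2 := by
  rw [sum_chiFourDivisorSum_mul, ← sum_filter_add_sum_filter_not _ (fun p ↦ p.2.1 < p.1.1),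
    sum_oddQuadruples_snd_lt_fst hu, zero_add,
    ← sum_filter_add_sum_filter_not _ (fun p ↦ p.1.1 < p.2.1), filter_filter, filter_filter]
  simp only [not_lt]
  have hlt (p : (ℕ × ℕ) × ℕ × ℕ) : p.1.1 ≤ p.2.1 ∧ p.1.1 < p.2.1 ↔ p.1.1 < p.2.1 := by omega
  have heq (p : (ℕ × ℕ) × ℕ × ℕ) : p.1.1 ≤ p.2.1 ∧ p.2.1 ≤ p.1.1 ↔ p.1.1 = p.2.1 := by omega
  simp only [hlt, heq]
  rw [sum_oddQuadruples_fst_lt_snd hu, zero_add]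
  exact le_sum_oddQuadruples_fst_eq_snd u

end FourSquares

section LatticeSphere

open Finset

/-- The points of `ℤ^d` of squared Euclidean norm `n`. -/
def latticeSphere (d : ℕ) (n : ℤ) : Set (Fin d → ℤ) := {m | ∑ i, m i ^ 2 = n}

lemma finite_latticeSphere (d : ℕ) (n : ℤ) : (latticeSphere d n).Finite := by
  refine (Set.Finite.pi fun _ ↦ Set.finite_Icc (-n) n).subset
    fun m (hm : ∑ i, m i ^ 2 = n) i _ ↦ abs_le.1 ?_
  calc |m i| ≤ m i ^ 2 := by rw [← sq_abs]; exact Int.le_self_sq _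
    _ ≤ ∑ i, m i ^ 2 := single_le_sum (fun _ _ ↦ sq_nonneg _) (mem_univ i)
    _ = n := hm

/-- Identifying `m ∈ ℤ^4` with the Gaussian integers `p = m 0 + m 1 * I` and `q = m 2 + m 3 * I`,
the pair `(p + q, p - q)`, or `(p + q, I * (p - q))` if `rotate` holds. -/
def gaussianPair (m : Fin 4 → ℤ) (rotate : Bool) : GaussianInt × GaussianInt :=
  (⟨m 0 + m 2, m 1 + m 3⟩, bif rotate then ⟨m 3 - m 1, m 0 - m 2⟩ else ⟨m 0 - m 2, m 1 - m 3⟩)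

lemma exists_gaussianPair_eq {m n u : ℤ} (hm : Odd m) (hmn : m + n = 2 * u) {z w : GaussianInt}
    (hz : z ∈ gaussianSphere m) (hw : w ∈ gaussianSphere n) :
    ∃ x ∈ latticeSphere 4 u, ∃ rotate, gaussianPair x rotate = (z, w) := by
  obtain ⟨a, b⟩ := z
  obtain ⟨c, e⟩ := w
  have hab : a ^ 2 + b ^ 2 = m := sq_add_sq_eq_of_mem_gaussianSphere hz
  have hce : c ^ 2 + e ^ 2 = n := sq_add_sq_eq_of_mem_gaussianSphere hw
  have hn : Odd n := by rw [Int.odd_iff] at hm ⊢; omega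
  have hodd (x y : ℤ) (h : Odd (x ^ 2 + y ^ 2)) : (x + y) % 2 = 1 := by
    rwa [Int.odd_add, Int.odd_pow' two_ne_zero, Int.even_pow' two_ne_zero, ← Int.odd_add,
      Int.odd_iff] at h
  have hab2 := hodd a b (hab ▸ hm)
  have hce2 := hodd c e (hce ▸ hn)
  have hsol (c e : ℤ) (hsum : a ^ 2 + b ^ 2 + (c ^ 2 + e ^ 2) = 2 * u) (hc : Even (a + c))
      (he : Even (b + e)) : ∃ x ∈ latticeSphere 4 u,
        x 0 + x 2 = a ∧ x 1 + x 3 = b ∧ x 0 - x 2 = c ∧ x 1 - x 3 = e := by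
    obtain ⟨r, hr⟩ := hc
    obtain ⟨s, hs⟩ := he
    refine ⟨![r, s, a - r, b - s], ?_, by simp; omega⟩
    have hsum4 : r ^ 2 + s ^ 2 + (a - r) ^ 2 + (b - s) ^ 2 = u := by
      obtain rfl : c = 2 * r - a := by omega
      obtain rfl : e = 2 * s - b := by omega
      linarith
    simpa [latticeSphere, Fin.sum_univ_four] using hsum4
  by_cases hac : Even (a + c)
  · obtain ⟨x, hx, h0, h1, h2, h3⟩ := hsol c e (by linarith) hac (by rw [Int.even_iff] at *; omega)
    exact ⟨x, hx, false, by simp [gaussianPair, h0, h1, h2, h3]⟩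
  · obtain ⟨x, hx, h0, h1, h2, h3⟩ := hsol e (-c) (by linarith) (by rw [Int.even_iff] at *; omega)
      (by rw [Int.even_iff] at *; omega)
    exact ⟨x, hx, true, by simp [gaussianPair, h0, h1, h2, ← neg_sub (x 1), h3]⟩

lemma sum_ncard_gaussianSphere_mul_le (u : ℕ) :
    ∑ m ∈ antidiagonal (2 * u) with Odd m.1,
      (gaussianSphere m.1).ncard * (gaussianSphere m.2).ncard ≤ (latticeSphere 4 u).ncard * 2 := by
  classical
  let pairs (m : ℕ × ℕ) : Finset (GaussianInt × GaussianInt) :=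
    (finite_gaussianSphere m.1).toFinset ×ˢ (finite_gaussianSphere m.2).toFinset
  have hmem {m : ℕ × ℕ} {p : GaussianInt × GaussianInt} :
      p ∈ pairs m ↔ p.1.norm = m.1 ∧ p.2.norm = m.2 := by
    simp [pairs, gaussianSphere]
  have hdisj : (((antidiagonal (2 * u)).filter (Odd ·.1) : Finset (ℕ × ℕ)) :
      Set (ℕ × ℕ)).PairwiseDisjoint pairs := by
    refine fun m _ n _ hmn ↦ disjoint_left.2 fun p hm hn ↦ hmn (Prod.ext ?_ ?_)
    · exact Nat.cast_injective ((hmem.1 hm).1.symm.trans (hmem.1 hn).1)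
    · exact Nat.cast_injective ((hmem.1 hm).2.symm.trans (hmem.1 hn).2)
  calc ∑ m ∈ antidiagonal (2 * u) with Odd m.1,
        (gaussianSphere m.1).ncard * (gaussianSphere m.2).ncard
      = (((antidiagonal (2 * u)).filter (Odd ·.1)).biUnion pairs).card := by
        simp only [card_biUnion hdisj, pairs, card_product, Set.ncard_eq_toFinset_card _
          (finite_gaussianSphere _)]
    _ ≤ (((finite_latticeSphere 4 u).toFinset ×ˢ (univ : Finset Bool)).image
          fun x ↦ gaussianPair x.1 x.2).card := by
        refine card_le_card (biUnion_subset.2 fun m hm p hp ↦ ?_)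
        obtain ⟨hsum, hodd⟩ := mem_filter.1 hm
        obtain ⟨x, hx, rotate, hxp⟩ := exists_gaussianPair_eq (u := u) (m := m.1) (n := m.2)
          (mod_cast hodd) (mod_cast HasAntidiagonal.mem_antidiagonal.1 hsum) (hmem.1 hp).1
          (hmem.1 hp).2
        exact mem_image.2 ⟨(x, rotate), by simpa using hx, hxp⟩
    _ ≤ (latticeSphere 4 u).ncard * 2 := by
        rw [Set.ncard_eq_toFinset_card _ (finite_latticeSphere 4 u)]
        exact card_image_le.trans_eq (by rw [card_product, card_univ, Fintype.card_bool])

theorem eight_mul_le_ncard_latticeSphere_four {u : ℕ} (hu : Odd u) :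
    8 * u ≤ (latticeSphere 4 u).ncard := by
  have hle : ∀ m ∈ (antidiagonal (2 * u)).filter (Odd ·.1),
      16 * (chiFourDivisorSum m.1 * chiFourDivisorSum m.2) ≤
        ((gaussianSphere m.1).ncard * (gaussianSphere m.2).ncard : ℕ) := by
    intro m hm
    obtain ⟨hsum, h1⟩ := mem_filter.1 hm
    have h2 : Odd m.2 := by
      rw [HasAntidiagonal.mem_antidiagonal] at hsum
      rw [Nat.odd_iff] at h1 ⊢
      omega
    obtain ⟨-, hle1⟩ := four_mul_chiFourDivisorSum_le_ncard h1
    obtain ⟨hpos2, hle2⟩ := four_mul_chiFourDivisorSum_le_ncard h2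
    push_cast
    nlinarith [mul_le_mul hle1 hle2 (by positivity) (by positivity)]
  have hsum := (sum_le_sum hle).trans_eq (Nat.cast_sum _ _).symm
  rw [← mul_sum] at hsum
  have := le_sum_chiFourDivisorSum_mul hu
  have := sum_ncard_gaussianSphere_mul_le u
  lia

lemma sum_ncard_latticeSphere_sub_sq_le {ι : Type*} (d : ℕ) (n : ℤ) (s : Finset ι) {φ : ι → ℤ}
    (hφ : Function.Injective φ) :
    ∑ i ∈ s, (latticeSphere d (n - φ i ^ 2)).ncard ≤ (latticeSphere (d + 1) n).ncard := by
  simp only [Set.ncard_eq_toFinset_card _ (finite_latticeSphere _ _)]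
  rw [← card_sigma]
  refine card_le_card_of_injOn (fun x ↦ Fin.cons (φ x.1) x.2) ?_ ?_
  · rintro ⟨i, m⟩ hx
    have hm : ∑ k, m k ^ 2 = n - φ i ^ 2 := by simpa [latticeSphere] using (mem_sigma.1 hx).2
    simp [latticeSphere, Fin.sum_univ_succ, hm]
  · rintro ⟨i, m⟩ _ ⟨i', m'⟩ _ h
    obtain ⟨hi, rfl⟩ := Fin.cons_inj.1 h
    obtain rfl := hφ hi
    rfl

lemma sqrt_half_succ_mul_le_ncard_latticeSphere_five {n : ℕ} (hn : n ≠ 0) :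
    ((n / 2).sqrt + 1) * n ≤ (latticeSphere 5 n).ncard := by
  have hsqrt : (n / 2).sqrt ^ 2 ≤ n / 2 := Nat.sqrt_le' _
  -- The slices `i` of parity opposite to that of `n` and with `0 ≤ i ≤ √(n / 2)`.
  obtain ⟨K, c, hK, hparity, hle⟩ : ∃ K c : ℕ, (n / 2).sqrt + 1 ≤ 3 * K ∧ Odd (c + n) ∧
      ∀ i < K, 2 * i + c ≤ (n / 2).sqrt := by
    rcases Nat.even_or_odd n with heven | hodd
    · have hpos : 0 < (n / 2).sqrt := Nat.sqrt_pos.2 (by rw [Nat.even_iff] at heven; omega)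
      exact ⟨((n / 2).sqrt + 1) / 2, 1, by omega, odd_one.add_even heven, by omega⟩
    · exact ⟨(n / 2).sqrt / 2 + 1, 0, by omega, by rwa [zero_add], by omega⟩
  have hslice : ∀ i ∈ range K,
      4 * n ≤ (latticeSphere 4 (n - ((2 * i + c : ℕ) : ℤ) ^ 2)).ncard := by
    intro i hi
    have hsq : (2 * i + c) ^ 2 ≤ n / 2 :=
      (Nat.pow_le_pow_left (hle i (mem_range.1 hi)) 2).trans hsqrt
    have hodd : Odd (n - (2 * i + c) ^ 2) := by
      rw [Nat.odd_iff] at hparity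
      rw [Nat.odd_sub (by omega), Nat.even_pow' two_ne_zero, Nat.odd_iff, Nat.even_iff]
      omega
    have := eight_mul_le_ncard_latticeSphere_four hodd
    rw [Nat.cast_sub (by omega), Nat.cast_pow] at this
    omega
  have hsum := card_nsmul_le_sum _ _ _ hslice
  rw [card_range, smul_eq_mul] at hsum
  have hslices := sum_ncard_latticeSphere_sub_sq_le 4 n (range K)
    (φ := fun i ↦ ((2 * i + c : ℕ) : ℤ)) fun i j hij ↦ by simpa using hij
  nlinarith

lemma rpow_half_le_sqrt_add_one (n : ℕ) :
    ((n : ℝ) / 2) ^ (1 / 2 : ℝ) ≤ (n / 2).sqrt + 1 := by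
  rw [← Real.sqrt_eq_rpow, Real.sqrt_le_iff]
  have hlt : n < 2 * ((n / 2).sqrt + 1) ^ 2 := by
    have hlt : n / 2 < ((n / 2).sqrt + 1) ^ 2 := Nat.lt_succ_sqrt' _
    omega
  have hlt' : (n : ℝ) < 2 * ((n / 2).sqrt + 1) ^ 2 := mod_cast hlt
  exact ⟨by positivity, by linarith⟩

lemma rpow_le_ncard_latticeSphere_succ {d : ℕ} {c s : ℝ} (hc : 0 ≤ c) (hs : 0 ≤ s)
    (h : ∀ n : ℕ, n ≠ 0 → c * (n : ℝ) ^ s ≤ (latticeSphere d n).ncard) {n : ℕ} (hn : n ≠ 0) :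
    c * ((n : ℝ) / 2) ^ (s + 1 / 2) ≤ (latticeSphere (d + 1) n).ncard := by
  have hslice : ∀ i ∈ range ((n / 2).sqrt + 1),
      c * ((n : ℝ) / 2) ^ s ≤ (latticeSphere d (n - (i : ℤ) ^ 2)).ncard := by
    intro i hi
    have hsq : i ^ 2 ≤ n / 2 :=
      (Nat.pow_le_pow_left (Nat.lt_succ_iff.1 (mem_range.1 hi)) 2).trans (Nat.sqrt_le' _)
    have hhalf : (n : ℝ) ≤ 2 * (n - i ^ 2 : ℕ) := mod_cast (by omega : n ≤ 2 * (n - i ^ 2))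
    rw [← Nat.cast_pow, ← Nat.cast_sub (by omega)]
    refine le_trans ?_ (h _ (by omega))
    gcongr
    linarith
  have hsum := card_nsmul_le_sum _ _ _ hslice
  rw [card_range, nsmul_eq_mul] at hsum
  have hslices := sum_ncard_latticeSphere_sub_sq_le d n (range ((n / 2).sqrt + 1))
    (φ := fun i ↦ (i : ℤ)) Nat.cast_injective
  calc c * ((n : ℝ) / 2) ^ (s + 1 / 2)
      = ((n : ℝ) / 2) ^ (1 / 2 : ℝ) * (c * ((n : ℝ) / 2) ^ s) := by
        rw [Real.rpow_add (by positivity)]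
        ring
    _ ≤ ((n / 2).sqrt + 1 : ℕ) * (c * ((n : ℝ) / 2) ^ s) := by
        push_cast
        gcongr
        exact rpow_half_le_sqrt_add_one n
    _ ≤ ∑ i ∈ range ((n / 2).sqrt + 1), ((latticeSphere d (n - (i : ℤ) ^ 2)).ncard : ℝ) := hsum
    _ ≤ (latticeSphere (d + 1) n).ncard := mod_cast hslices

theorem exists_rpow_le_ncard_latticeSphere {d : ℕ} (hd : 5 ≤ d) :
    ∃ c : ℝ, 0 < c ∧
      ∀ n : ℕ, n ≠ 0 → c * (n : ℝ) ^ ((d : ℝ) / 2 - 1) ≤ (latticeSphere d n).ncard := by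
  induction d, hd using Nat.le_induction with
  | base =>
    refine ⟨(1 / 2) ^ (1 / 2 : ℝ), by positivity, fun n hn ↦ ?_⟩
    calc (1 / 2) ^ (1 / 2 : ℝ) * (n : ℝ) ^ (((5 : ℕ) : ℝ) / 2 - 1)
        = ((n : ℝ) / 2) ^ (1 / 2 : ℝ) * n := by
          rw [show ((5 : ℕ) : ℝ) / 2 - 1 = 1 / 2 + 1 by norm_num, Real.rpow_add (by positivity),
            Real.rpow_one, div_eq_inv_mul (n : ℝ), Real.mul_rpow (by norm_num) (by positivity),
            one_div, mul_assoc]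
      _ ≤ ((n / 2).sqrt + 1) * n := by gcongr; exact rpow_half_le_sqrt_add_one n
      _ ≤ (latticeSphere 5 n).ncard :=
          mod_cast sqrt_half_succ_mul_le_ncard_latticeSphere_five hn
  | succ d hd ih =>
    obtain ⟨c, hc, hle⟩ := ih
    have hd' : (5 : ℝ) ≤ d := mod_cast hd
    refine ⟨c * (1 / 2) ^ ((d : ℝ) / 2 - 1 + 1 / 2), by positivity, fun n hn ↦ ?_⟩
    refine Eq.trans_le ?_ (rpow_le_ncard_latticeSphere_succ hc.le (by linarith) hle hn)
    rw [div_eq_inv_mul (n : ℝ), Real.mul_rpow (by norm_num) (by positivity), one_div, mul_assoc]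
    congr 3
    push_cast
    ring

end LatticeSphere

section Plancherel

lemma hasSum_norm_sq_of_orthonormal {ι 𝕜 E : Type*} [RCLike 𝕜] [SeminormedAddCommGroup E]
    [InnerProductSpace 𝕜 E] {v : ι → E} (hv : Orthonormal 𝕜 v) {a : ι → 𝕜} {x : E}
    (h : HasSum (fun n ↦ a n • v n) x) : HasSum (fun n ↦ ‖a n‖ ^ 2) (‖x‖ ^ 2) := by
  refine (Filter.Tendsto.pow h.norm 2).congr fun s ↦ ?_
  rw [@norm_sq_eq_re_inner 𝕜, hv.inner_sum, map_sum]
  exact Finset.sum_congr rfl fun n _ ↦ by rw [RCLike.conj_mul]; norm_cast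

section Convolution

variable {G R : Type*} [AddCommGroup G] [NormedRing R] {w f : G → R}

lemma summable_norm_mul_comp_sub (hw : Summable fun n ↦ ‖w n‖) (hf : Summable fun n ↦ ‖f n‖) :
    Summable fun p : G × G ↦ ‖w p.1 * f (p.2 - p.1)‖ :=
  (hw.mul_norm hf).comp_injective (i := Equiv.prodShear (.refl G) Equiv.subRight)
    (Equiv.injective _)

lemma summable_norm_convolution (hw : Summable fun n ↦ ‖w n‖) (hf : Summable fun n ↦ ‖f n‖) :
    Summable fun n ↦ ‖∑' m, w m * f (n - m)‖ :=
  have hsum := (summable_norm_mul_comp_sub hw hf).prod_symm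
  .of_nonneg_of_le (fun _ ↦ norm_nonneg _)
    (fun n ↦ norm_tsum_le_tsum_norm (hsum.prod_factor n)) hsum.prod

lemma tsum_convolution [CompleteSpace R] (hw : Summable fun n ↦ ‖w n‖)
    (hf : Summable fun n ↦ ‖f n‖) :
    ∑' n, ∑' m, w m * f (n - m) = (∑' n, w n) * ∑' n, f n := by
  rw [tsum_mul_tsum_of_summable_norm hw hf,
    ← (Equiv.prodShear (.refl G) Equiv.subRight).tsum_eq]
  have hsum := (summable_norm_mul_comp_sub hw hf).of_norm
  exact (hsum.tsum_comm).trans hsum.tsum_prod.symm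

end Convolution

variable {ι : Type*} [Fintype ι]

/-- The character `n ↦ e^{-2πi n·α}` of `ℤ^ι`, so that `∑' n, f n * latticeCharacter α n` is the
Fourier transform of `f` at `α`. -/
def latticeCharacter (α : ι → ℝ) (n : ι → ℤ) : ℂ :=
  Complex.exp (-(2 * (π : ℂ) * Complex.I) * (∑ i, (n i : ℝ) * α i))

lemma norm_latticeCharacter (α : ι → ℝ) (n : ι → ℤ) : ‖latticeCharacter α n‖ = 1 := by
  simp [latticeCharacter, Complex.norm_exp, -Complex.ofReal_sum]

lemma latticeCharacter_add (α : ι → ℝ) (m n : ι → ℤ) :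
    latticeCharacter α (m + n) = latticeCharacter α m * latticeCharacter α n := by
  simp only [latticeCharacter, ← Complex.exp_add, ← mul_add, ← Complex.ofReal_add,
    ← Finset.sum_add_distrib, Pi.add_apply, Int.cast_add, add_mul]

lemma latticeCharacter_eq_prod (α : ι → ℝ) (n : ι → ℤ) :
    latticeCharacter α n = ∏ i, Complex.exp (-(2 * (π : ℂ) * Complex.I) * (n i * α i)) := by
  simp [latticeCharacter, ← Complex.exp_sum, Finset.mul_sum]

lemma mFourier_coe_neg (n : ι → ℤ) (α : ι → ℝ) :
    UnitAddTorus.mFourier n (fun i ↦ ((-α i : ℝ) : UnitAddCircle)) = latticeCharacter α n := by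
  simp only [UnitAddTorus.mFourier, ContinuousMap.coe_mk, fourier_coe_apply,
    latticeCharacter_eq_prod]
  congr! 2
  push_cast
  ring

lemma norm_mul_latticeCharacter (w : (ι → ℤ) → ℂ) (α : ι → ℝ) (n : ι → ℤ) :
    ‖w n * latticeCharacter α n‖ = ‖w n‖ := by
  rw [norm_mul, norm_latticeCharacter, mul_one]

lemma tsum_convolution_mul_latticeCharacter {w f : (ι → ℤ) → ℂ} (hw : Summable fun n ↦ ‖w n‖)
    (hf : Summable fun n ↦ ‖f n‖) (α : ι → ℝ) :
    ∑' n, (∑' m, w m * f (n - m)) * latticeCharacter α n =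
      (∑' n, w n * latticeCharacter α n) * ∑' n, f n * latticeCharacter α n := by
  rw [← tsum_convolution (by simpa only [norm_mul_latticeCharacter] using hw)
    (by simpa only [norm_mul_latticeCharacter] using hf)]
  congr! 2 with n
  rw [← tsum_mul_right]
  congr! 2 with m
  have hchar := latticeCharacter_add α m (n - m)
  rw [add_sub_cancel] at hchar
  rw [hchar]
  ring

/-- The Fourier series on the torus with coefficients `g`, an absolutely convergent series of
continuous functions when `g` is summable. -/
def torusSeries (g : (ι → ℤ) → ℂ) : C(UnitAddTorus ι, ℂ) := ∑' n, g n • UnitAddTorus.mFourier n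

section TorusSeries

variable {g : (ι → ℤ) → ℂ}

lemma summable_smul_mFourier (hg : Summable fun n ↦ ‖g n‖) :
    Summable fun n ↦ g n • UnitAddTorus.mFourier n := by
  refine Summable.of_norm ?_
  simpa only [norm_smul, UnitAddTorus.mFourier_norm, mul_one] using hg

lemma torusSeries_coe_neg (hg : Summable fun n ↦ ‖g n‖) (α : ι → ℝ) :
    torusSeries g (fun i ↦ ((-α i : ℝ) : UnitAddCircle)) = ∑' n, g n * latticeCharacter α n := by
  simp only [torusSeries, ← ContinuousMap.tsum_apply (summable_smul_mFourier hg),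
    ContinuousMap.smul_apply, mFourier_coe_neg, smul_eq_mul]

lemma hasSum_norm_sq_torusSeries {μ : MeasureTheory.Measure (UnitAddTorus ι)}
    [MeasureTheory.IsFiniteMeasure μ]
    (hμ : Orthonormal ℂ fun n ↦ ContinuousMap.toLp 2 μ ℂ (UnitAddTorus.mFourier (d := ι) n))
    (hg : Summable fun n ↦ ‖g n‖) :
    HasSum (fun n ↦ ‖g n‖ ^ 2) (‖ContinuousMap.toLp 2 μ ℂ (torusSeries g)‖ ^ 2) := by
  refine hasSum_norm_sq_of_orthonormal hμ ?_
  rw [torusSeries]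
  have hsum := (summable_smul_mFourier hg).hasSum.mapL (ContinuousMap.toLp (E := ℂ) 2 μ ℂ)
  simpa only [map_smul] using hsum

end TorusSeries

-- The measure on the torus for which Mathlib proves this is not a global instance.
lemma exists_measure_orthonormal_mFourier (ι : Type*) [Fintype ι] :
    ∃ (μ : MeasureTheory.Measure (UnitAddTorus ι)) (_ : MeasureTheory.IsFiniteMeasure μ),
      Orthonormal ℂ fun n ↦ ContinuousMap.toLp 2 μ ℂ (UnitAddTorus.mFourier (d := ι) n) :=
  ⟨_, _, UnitAddTorus.orthonormal_mFourier⟩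

lemma tsum_norm_convolution_sq_le {w f : (ι → ℤ) → ℂ} (hw : Summable fun n ↦ ‖w n‖)
    (hf : Summable fun n ↦ ‖f n‖) {M : ℝ}
    (h : ∀ α, ∑' n, f n * latticeCharacter α n ≠ 0 → ‖∑' n, w n * latticeCharacter α n‖ ≤ M) :
    Summable (fun n ↦ ‖∑' m, w m * f (n - m)‖ ^ 2) ∧
      ∑' n, ‖∑' m, w m * f (n - m)‖ ^ 2 ≤ M ^ 2 * ∑' n, ‖f n‖ ^ 2 := by
  obtain ⟨μ, _, hμ⟩ := exists_measure_orthonormal_mFourier ι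
  have hconv := summable_norm_convolution hw hf
  have hconvSum := hasSum_norm_sq_torusSeries hμ hconv
  have hpointwise (x : UnitAddTorus ι) :
      ‖torusSeries (fun n ↦ ∑' m, w m * f (n - m)) x‖ ≤ M * ‖torusSeries f x‖ := by
    choose β hβ using fun i ↦ QuotientAddGroup.mk_surjective (x i)
    obtain ⟨α, rfl⟩ : ∃ α : ι → ℝ, (fun i ↦ ((-α i : ℝ) : UnitAddCircle)) = x :=
      ⟨-β, funext fun i ↦ by rw [Pi.neg_apply, neg_neg]; exact hβ i⟩
    rw [torusSeries_coe_neg hconv, torusSeries_coe_neg hf,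
      tsum_convolution_mul_latticeCharacter hw hf, norm_mul]
    by_cases hα : ∑' n, f n * latticeCharacter α n = 0
    · simp [hα]
    · gcongr
      exact h α hα
  have hnorm : ‖ContinuousMap.toLp 2 μ ℂ (torusSeries fun n ↦ ∑' m, w m * f (n - m))‖ ≤
      M * ‖ContinuousMap.toLp 2 μ ℂ (torusSeries f)‖ := by
    refine MeasureTheory.Lp.norm_le_mul_norm_of_ae_le_mul ?_
    filter_upwards [ContinuousMap.coeFn_toLp (p := 2) (𝕜 := ℂ) μ (torusSeries f),
      ContinuousMap.coeFn_toLp (p := 2) (𝕜 := ℂ) μ (torusSeries fun n ↦ ∑' m, w m * f (n - m))]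
      with x hfx hx
    rw [hfx, hx]
    exact hpointwise x
  refine ⟨hconvSum.summable, ?_⟩
  rw [hconvSum.tsum_eq, (hasSum_norm_sq_torusSeries hμ hf).tsum_eq, ← mul_pow]
  gcongr

end Plancherel

section QuadraticGaussSum

lemma quadraticGaussSum_mul_conj {R : Type*} [CommRing R] [Fintype R] [DecidableEq R]
    {ψ : AddChar R ℂ} (hψ : ψ.IsPrimitive) {a : R} (ha : IsUnit a) (l : R) :
    (∑ r, ψ (a * r ^ 2 + l * r)) * (starRingEnd ℂ) (∑ r, ψ (a * r ^ 2 + l * r)) =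
      Fintype.card R * ∑ h with 2 * h = 0, ψ (a * h ^ 2 + l * h) := by
  have hshift (s : R) :
      ∑ r, ψ (a * r ^ 2 + l * r) * (starRingEnd ℂ) (ψ (a * s ^ 2 + l * s)) =
        ∑ h, ψ (a * h ^ 2 + l * h) * ψ (s * (a * (2 * h))) := by
    rw [← Equiv.sum_comp (Equiv.addRight s)]
    refine Finset.sum_congr rfl fun h _ ↦ ?_
    rw [← AddChar.map_neg_eq_conj, ← AddChar.map_add_eq_mul, ← AddChar.map_add_eq_mul,
      Equiv.coe_addRight]
    ring_nf
  simp_rw [map_sum, Finset.sum_mul_sum]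
  rw [Finset.sum_comm]
  simp_rw [hshift]
  rw [Finset.sum_comm, Finset.sum_filter, Finset.mul_sum]
  refine Finset.sum_congr rfl fun h _ ↦ ?_
  rw [← Finset.mul_sum, AddChar.sum_mulShift _ hψ]
  simp only [ha.mul_right_eq_zero]
  split_ifs <;> simp [mul_comm]

lemma norm_quadraticGaussSum_sq_le {R : Type*} [CommRing R] [Fintype R] [DecidableEq R]
    {ψ : AddChar R ℂ} (hψ : ψ.IsPrimitive) {a : R} (ha : IsUnit a) (l : R) :
    ‖∑ r, ψ (a * r ^ 2 + l * r)‖ ^ 2 ≤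
      Fintype.card R * (Finset.univ.filter fun h : R ↦ 2 * h = 0).card := by
  calc ‖∑ r, ψ (a * r ^ 2 + l * r)‖ ^ 2
      = ‖Fintype.card R * ∑ h with 2 * h = 0, ψ (a * h ^ 2 + l * h)‖ := by
        rw [← quadraticGaussSum_mul_conj hψ ha, norm_mul, RCLike.norm_conj, sq]
    _ ≤ Fintype.card R * ∑ h with 2 * h = 0, ‖ψ (a * h ^ 2 + l * h)‖ := by
        rw [norm_mul, Complex.norm_natCast]
        gcongr
        exact norm_sum_le _ _
    _ = Fintype.card R * (Finset.univ.filter fun h : R ↦ 2 * h = 0).card := by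
        simp [AddChar.norm_apply]

lemma norm_invDFT_quadratic_le (q : ℕ) [NeZero q] {a : ZMod q} (ha : IsUnit a) (l : ZMod q) :
    ‖ZMod.dft.symm (fun r : ZMod q ↦ (ZMod.stdAddChar (a * r ^ 2) : ℂ)) l‖ ≤ √2 / √q := by
  have hq : (0 : ℝ) < q := mod_cast NeZero.pos q
  have hcard : (Finset.univ.filter fun h : ZMod q ↦ 2 * h = 0).card ≤ 2 := by
    simpa only [nsmul_eq_mul, Nat.cast_ofNat] using
      IsAddCyclic.card_nsmul_eq_zero_le (α := ZMod q) two_pos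
  have hsum : ‖∑ r : ZMod q, (ZMod.stdAddChar (a * r ^ 2 + l * r) : ℂ)‖ ≤ √(q * 2) := by
    refine Real.le_sqrt_of_sq_le
      ((norm_quadraticGaussSum_sq_le (ZMod.isPrimitive_stdAddChar q) ha l).trans ?_)
    rw [ZMod.card]
    gcongr
    exact mod_cast hcard
  calc ‖ZMod.dft.symm (fun r : ZMod q ↦ (ZMod.stdAddChar (a * r ^ 2) : ℂ)) l‖
      = (q : ℝ)⁻¹ * ‖∑ r : ZMod q, (ZMod.stdAddChar (a * r ^ 2 + l * r) : ℂ)‖ := by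
        simp only [ZMod.invDFT_apply, smul_eq_mul, ← AddChar.map_add_eq_mul, mul_comm l, add_comm,
          norm_mul, norm_inv, Complex.norm_natCast]
    _ ≤ (q : ℝ)⁻¹ * √(q * 2) := by gcongr
    _ = √2 / √q := by
        rw [Real.sqrt_mul hq.le, ← mul_assoc, inv_mul_eq_div, Real.sqrt_div_self',
          one_div_mul_eq_div]

end QuadraticGaussSum

section Theta

lemma summable_exp_neg_mul_sub_sq_le {c : ℝ} (hc : 0 < c) : ∃ K : ℝ, 0 < K ∧ ∀ x : ℝ,
    Summable (fun m : ℤ ↦ Real.exp (-π * c * (m - x) ^ 2)) ∧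
      ∑' m : ℤ, Real.exp (-π * c * (m - x) ^ 2) ≤ K := by
  have hsum : Summable fun n : ℤ ↦ Real.exp (-π * (c / 4) * n ^ 2) :=
    (summable_pow_mul_jacobiTheta₂_term_bound 0 (T := c / 4) (by positivity) 0).congr
      fun n ↦ by simp only [pow_zero, one_mul]; ring_nf
  refine ⟨_, hsum.tsum_pos (fun _ ↦ (Real.exp_pos _).le) 0 (Real.exp_pos _), fun x ↦ ?_⟩
  let e : ℤ ≃ ℤ := Equiv.addRight (round x)
  have hle (n : ℤ) :
      Real.exp (-π * c * ((e n : ℤ) - x) ^ 2) ≤ Real.exp (-π * (c / 4) * n ^ 2) := by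
    have hround : |(n : ℝ)| ≤ 2 * |(e n : ℤ) - x| := by
      have hx := abs_sub_round x
      have hn : |(n : ℝ)| ≤ |(e n : ℤ) - x| + |x - round x| := by
        refine le_trans (le_of_eq ?_) (abs_add_le _ _)
        simp [e]
      rcases eq_or_ne n 0 with rfl | hn0
      · simp
      · have : (1 : ℝ) ≤ |(n : ℝ)| := mod_cast Int.one_le_abs hn0
        linarith
    have hsq : (n : ℝ) ^ 2 ≤ 4 * ((e n : ℤ) - x) ^ 2 := by
      rw [← sq_abs (n : ℝ), ← sq_abs ((e n : ℤ) - x)]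
      nlinarith [abs_nonneg (n : ℝ)]
    have hmul := mul_le_mul_of_nonneg_left hsq (by positivity : 0 ≤ π * (c / 4))
    exact Real.exp_le_exp.2 (by linarith)
  have hsumShift : Summable fun n : ℤ ↦ Real.exp (-π * c * ((e n : ℤ) - x) ^ 2) :=
    .of_nonneg_of_le (fun _ ↦ (Real.exp_pos _).le) hle hsum
  refine ⟨e.summable_iff.1 hsumShift, ?_⟩
  rw [← e.tsum_eq]
  exact hsumShift.tsum_le_tsum hle hsum

/-- The terms of the theta series `∑ m, e^{-2π z m² - 2πi α m}`. -/
def thetaTerm (z : ℂ) (α : ℝ) (m : ℤ) : ℂ :=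
  Complex.exp (-π * (2 * z) * m ^ 2 + 2 * π * (-Complex.I * α) * m)

lemma summable_thetaTerm {z : ℂ} (hz : 0 < z.re) (α : ℝ) : Summable (thetaTerm z α) := by
  refine ((summable_jacobiTheta₂_term_iff (-α) (Complex.I * (2 * z))).2 (by simpa using hz)).congr
    fun m ↦ ?_
  rw [jacobiTheta₂_term, thetaTerm]
  congr 1
  linear_combination (2 * π * m ^ 2 * z) * Complex.I_sq

lemma summable_exp_neg_mul_add_sq {c : ℝ} (hc : 0 < c) (x : ℝ) :
    Summable fun n : ℤ ↦ Real.exp (-π * c * (n + x) ^ 2) := by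
  obtain ⟨_, _, h⟩ := summable_exp_neg_mul_sub_sq_le hc
  simpa only [sub_neg_eq_add] using (h (-x)).1

lemma norm_tsum_thetaTerm_le {z : ℂ} (hz : 0 < z.re) (α : ℝ) :
    ‖∑' m, thetaTerm z α m‖ ≤
      (√‖z‖)⁻¹ * ∑' n : ℤ, Real.exp (-π * (z.re / (2 * ‖z‖ ^ 2)) * (n + α) ^ 2) := by
  have hz0 : 0 < ‖z‖ := norm_pos_iff.2 (by rintro rfl; simp at hz)
  have hfactor : ‖1 / (2 * z) ^ (1 / 2 : ℂ)‖ ≤ (√‖z‖)⁻¹ := by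
    have hcpow : ‖(2 * z) ^ (1 / 2 : ℂ)‖ = √(2 * ‖z‖) := by
      rw [show (1 / 2 : ℂ) = ((1 / 2 : ℝ) : ℂ) by push_cast; rfl, Complex.norm_cpow_real,
        Real.sqrt_eq_rpow, norm_mul, Complex.norm_two]
    rw [norm_div, norm_one, one_div, hcpow]
    gcongr
    linarith
  have hterm (n : ℤ) :
      ‖Complex.exp (-π / (2 * z) * (n + Complex.I * (-Complex.I * α)) ^ 2)‖ =
        Real.exp (-π * (z.re / (2 * ‖z‖ ^ 2)) * (n + α) ^ 2) := by
    have hexponent : -π / (2 * z) * (n + Complex.I * (-Complex.I * α)) ^ 2 =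
        ((-π / 2 * (n + α) ^ 2 : ℝ) : ℂ) * z⁻¹ := by
      rw [← mul_assoc, mul_neg, Complex.I_mul_I, neg_neg, one_mul]
      push_cast
      ring
    rw [Complex.norm_exp, hexponent, Complex.re_ofReal_mul, Complex.inv_re,
      Complex.normSq_eq_norm_sq]
    ring_nf
  simp only [thetaTerm]
  rw [Complex.tsum_exp_neg_quadratic (by simpa using hz), norm_mul]
  gcongr
  simp_rw [← hterm]
  refine norm_tsum_le_tsum_norm ?_
  simp_rw [hterm]
  exact summable_exp_neg_mul_add_sq (by positivity) α

lemma sum_tsum_residueClasses {E : Type*} [NormedAddCommGroup E] [CompleteSpace E] {f : ℤ → E}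
    (hf : Summable f) (q : ℕ) [NeZero q] :
    ∑ l : ZMod q, ∑' n : ℤ, f (n * q + l.val) = ∑' m, f m := by
  have hsum : Summable fun p : ℤ × Fin q ↦ f (p.1 * q + (p.2 : ℕ)) := by
    simpa only [Function.comp_def, Int.divModEquiv_symm_apply] using
      (Int.divModEquiv q).symm.summable_iff.2 hf
  have hval (g : ℕ → E) : ∑ l : ZMod q, g l.val = ∑ i : Fin q, g i := by
    obtain _ | q := q
    · exact absurd rfl (NeZero.ne 0)
    · rfl
  calc ∑ l : ZMod q, ∑' n : ℤ, f (n * q + l.val)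
      = ∑ i : Fin q, ∑' n : ℤ, f (n * q + (i : ℕ)) := hval fun i ↦ ∑' n : ℤ, f (n * q + i)
    _ = ∑' p : ℤ × Fin q, f (p.1 * q + (p.2 : ℕ)) := by
        rw [hsum.tsum_prod, ← tsum_fintype (L := .unconditional _)]
        exact Summable.tsum_comm (f := fun (n : ℤ) (i : Fin q) ↦ f (n * q + i.val)) hsum
    _ = ∑' m, f m := by
        rw [← (Int.divModEquiv q).symm.tsum_eq]
        simp only [Int.divModEquiv_symm_apply]

lemma thetaTerm_sub_div (z : ℂ) (q : ℕ) [NeZero q] (a : ℤ) (α : ℝ) (m : ℤ) :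
    thetaTerm (z - Complex.I * (a / q)) α m =
      ∑ l : ZMod q, ZMod.dft.symm (fun r : ZMod q ↦ ZMod.stdAddChar ((a : ZMod q) * r ^ 2)) l *
        thetaTerm z (α + l.val / q) m := by
  have hphase : thetaTerm (z - Complex.I * (a / q)) α m =
      ZMod.stdAddChar ((a : ZMod q) * (m : ZMod q) ^ 2) * thetaTerm z α m := by
    rw [← Int.cast_pow, ← Int.cast_mul, ZMod.stdAddChar_coe, thetaTerm, thetaTerm,
      ← Complex.exp_add]
    push_cast
    ring_nf
  have hshift (l : ZMod q) :
      thetaTerm z (α + l.val / q) m = ZMod.stdAddChar (-(l * (m : ZMod q))) * thetaTerm z α m := by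
    rw [show -(l * (m : ZMod q)) = ((-(l.val * m) : ℤ) : ZMod q) by simp, ZMod.stdAddChar_coe,
      thetaTerm, thetaTerm, ← Complex.exp_add]
    push_cast
    ring_nf
  have hinv := congrFun (ZMod.dft.apply_symm_apply
    fun r : ZMod q ↦ (ZMod.stdAddChar ((a : ZMod q) * r ^ 2) : ℂ)) m
  rw [hphase, ← hinv, ZMod.dft_apply, Finset.sum_mul]
  exact Finset.sum_congr rfl fun l _ ↦ by rw [hshift, smul_eq_mul]; ring

lemma norm_tsum_thetaTerm_sub_div_le {z : ℂ} (hz : 0 < z.re) {q : ℕ} [NeZero q] {a : ℤ}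
    (ha : IsCoprime a (q : ℤ)) (α : ℝ) :
    ‖∑' m, thetaTerm (z - Complex.I * (a / q)) α m‖ ≤
      √2 / √q * (√‖z‖)⁻¹ *
        ∑' m : ℤ, Real.exp (-π * (z.re / (2 * ‖z‖ ^ 2)) * (m / q + α) ^ 2) := by
  have hq : (0 : ℝ) < q := mod_cast NeZero.pos q
  have hz0 : 0 < ‖z‖ := norm_pos_iff.2 (by rintro rfl; simp at hz)
  have haUnit : IsUnit (a : ZMod q) := by rwa [ZMod.coe_int_isUnit_iff_isCoprime, isCoprime_comm]
  let c : ℝ := z.re / (2 * ‖z‖ ^ 2)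
  have hgauss : Summable fun m : ℤ ↦ Real.exp (-π * c * (m / q + α) ^ 2) := by
    refine (summable_exp_neg_mul_add_sq (c := c / q ^ 2) (by positivity) (q * α)).congr fun m ↦ ?_
    congr 1
    field_simp
  simp_rw [thetaTerm_sub_div]
  rw [Summable.tsum_finsetSum fun l _ ↦ (summable_thetaTerm hz _).mul_left _,
    ← sum_tsum_residueClasses hgauss q, Finset.mul_sum]
  refine (norm_sum_le _ _).trans (Finset.sum_le_sum fun l _ ↦ ?_)
  rw [tsum_mul_left, norm_mul, mul_assoc]
  gcongr
  · exact norm_invDFT_quadratic_le q haUnit l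
  · refine (norm_tsum_thetaTerm_le hz _).trans_eq ?_
    congr! 6 with n
    push_cast
    field_simp
    ring

lemma exists_tsum_exp_neg_mul_sq_le : ∃ K : ℝ, 0 < K ∧ ∀ (q : ℕ) [NeZero q] (c α D : ℝ),
    (q : ℝ) ^ 2 ≤ 4 * c → 0 ≤ D → (∀ m : ℤ, D ≤ |α - m / q|) →
      ∑' m : ℤ, Real.exp (-π * c * (m / q + α) ^ 2) ≤ K * Real.exp (-(π / 2) * c * D ^ 2) := by
  obtain ⟨K, hK, h⟩ := summable_exp_neg_mul_sub_sq_le (c := 1 / 8) (by norm_num)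
  refine ⟨K, hK, fun q _ c α D hqc hD hα ↦ ?_⟩
  have hq : (0 : ℝ) < q := mod_cast NeZero.pos q
  obtain ⟨hsum, hbound⟩ := h (-(q * α))
  have hle (m : ℤ) : Real.exp (-π * c * (m / q + α) ^ 2) ≤
      Real.exp (-π * (1 / 8) * (m - -(q * α)) ^ 2) * Real.exp (-(π / 2) * c * D ^ 2) := by
    have hdist : D ^ 2 ≤ (m / q + α) ^ 2 := by
      rw [← sq_abs (m / q + α)]
      have := hα (-m)
      push_cast at this
      rw [neg_div, sub_neg_eq_add, add_comm] at this
      gcongr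
    have hscale : (m - -(q * α)) ^ 2 = (q : ℝ) ^ 2 * (m / q + α) ^ 2 := by
      field_simp
      ring
    rw [← Real.exp_add, hscale]
    refine Real.exp_le_exp.2 ?_
    have hfirst : (q : ℝ) ^ 2 * (m / q + α) ^ 2 ≤ 4 * c * (m / q + α) ^ 2 := by gcongr
    have hsecond : c * D ^ 2 ≤ c * (m / q + α) ^ 2 := by
      have : 0 ≤ c := by nlinarith
      gcongr
    nlinarith [Real.pi_pos]
  calc ∑' m : ℤ, Real.exp (-π * c * (m / q + α) ^ 2)
      ≤ ∑' m : ℤ, Real.exp (-π * (1 / 8) * (m - -(q * α)) ^ 2) *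
          Real.exp (-(π / 2) * c * D ^ 2) :=
        Summable.tsum_le_tsum hle (.of_nonneg_of_le (fun _ ↦ (Real.exp_pos _).le) hle
          (hsum.mul_right _)) (hsum.mul_right _)
    _ ≤ K * Real.exp (-(π / 2) * c * D ^ 2) := by
        rw [tsum_mul_right]
        gcongr

lemma exists_norm_tsum_thetaTerm_sub_div_le : ∃ K : ℝ, 0 < K ∧
    ∀ (z : ℂ) (q : ℕ) [NeZero q] (a : ℤ) (α D : ℝ), 0 < z.re → IsCoprime a (q : ℤ) →
      (q : ℝ) ^ 2 * ‖z‖ ^ 2 ≤ 2 * z.re → 0 ≤ D → (∀ m : ℤ, D ≤ |α - m / q|) →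
      ‖∑' m, thetaTerm (z - Complex.I * (a / q)) α m‖ ≤
        K * (√q)⁻¹ * (√‖z‖)⁻¹ * Real.exp (-(π / 4) * D ^ 2 * (z.re / ‖z‖ ^ 2)) := by
  obtain ⟨K, hK, hgauss⟩ := exists_tsum_exp_neg_mul_sq_le
  refine ⟨√2 * K, by positivity, fun z q _ a α D hz ha hqz hD hα ↦ ?_⟩
  have hz0 : 0 < ‖z‖ := norm_pos_iff.2 (by rintro rfl; simp at hz)
  have hqc : (q : ℝ) ^ 2 ≤ 4 * (z.re / (2 * ‖z‖ ^ 2)) := by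
    rw [← mul_div_assoc, le_div_iff₀ (by positivity)]
    linarith
  calc ‖∑' m, thetaTerm (z - Complex.I * (a / q)) α m‖
      ≤ √2 / √q * (√‖z‖)⁻¹ * (K * Real.exp (-(π / 2) * (z.re / (2 * ‖z‖ ^ 2)) * D ^ 2)) := by
        refine (norm_tsum_thetaTerm_sub_div_le hz ha α).trans ?_
        gcongr
        exact hgauss q _ α D hqc hD hα
    _ = √2 * K * (√q)⁻¹ * (√‖z‖)⁻¹ * Real.exp (-(π / 4) * D ^ 2 * (z.re / ‖z‖ ^ 2)) := by
        rw [show -(π / 2) * (z.re / (2 * ‖z‖ ^ 2)) * D ^ 2 =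
          -(π / 4) * D ^ 2 * (z.re / ‖z‖ ^ 2) by ring]
        ring

end Theta

section GaussianMultiplier

lemma summable_norm_prod_and_tsum_prod {R : Type*} [NormedCommRing R] [NormOneClass R]
    [CompleteSpace R] {β : Type*} {d : ℕ} {g : Fin d → β → R}
    (hg : ∀ i, Summable fun m ↦ ‖g i m‖) :
    Summable (fun m : Fin d → β ↦ ‖∏ i, g i (m i)‖) ∧
      ∑' m : Fin d → β, ∏ i, g i (m i) = ∏ i, ∑' m, g i m := by
  induction d with
  | zero => simp [Summable.of_finite, tsum_fintype]
  | succ d ih =>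
    obtain ⟨hsum, htsum⟩ := ih fun i ↦ hg i.succ
    let e := Fin.consEquiv fun _ : Fin (d + 1) ↦ β
    have hcons (p : β × (Fin d → β)) :
        ∏ i, g i (e p i) = g 0 p.1 * ∏ i : Fin d, g i.succ (p.2 i) := by
      simp [Fin.prod_univ_succ, e, Fin.consEquiv]
    constructor
    · rw [← e.summable_iff]
      exact ((hg 0).mul_norm hsum).congr fun p ↦ by simp only [Function.comp_apply, hcons]
    · rw [← e.tsum_eq, Fin.prod_univ_succ, ← htsum, tsum_mul_tsum_of_summable_norm (hg 0) hsum]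
      exact tsum_congr hcons

/-- The Gaussian weight `e^{-2π z |m|²}` on `ℤ^d`. For `z = ε - i t` it is the generating function
in `t` of the indicator functions of the lattice spheres, damped by `e^{-2π ε |m|²}`. -/
def gaussianWeight {d : ℕ} (z : ℂ) (m : Fin d → ℤ) : ℂ :=
  Complex.exp (-(2 * π) * z * ∑ i, (m i : ℂ) ^ 2)

variable {d : ℕ} {z : ℂ}

lemma gaussianWeight_mul_latticeCharacter (z : ℂ) (α : Fin d → ℝ) (m : Fin d → ℤ) :
    gaussianWeight z m * latticeCharacter α m = ∏ i, thetaTerm z (α i) (m i) := by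
  rw [gaussianWeight, latticeCharacter_eq_prod, Finset.mul_sum, Complex.exp_sum,
    ← Finset.prod_mul_distrib]
  refine Finset.prod_congr rfl fun i _ ↦ ?_
  rw [thetaTerm, ← Complex.exp_add]
  ring_nf

lemma summable_norm_gaussianWeight (hz : 0 < z.re) :
    Summable fun m : Fin d → ℤ ↦ ‖gaussianWeight z m‖ := by
  refine (summable_norm_prod_and_tsum_prod fun i ↦
    (summable_thetaTerm hz ((0 : Fin d → ℝ) i)).norm).1.congr fun m ↦ ?_
  rw [← gaussianWeight_mul_latticeCharacter z 0, norm_mul_latticeCharacter]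

lemma norm_tsum_gaussianWeight_mul_latticeCharacter (hz : 0 < z.re) (α : Fin d → ℝ) :
    ‖∑' m, gaussianWeight z m * latticeCharacter α m‖ = ∏ i, ‖∑' m, thetaTerm z (α i) m‖ := by
  simp_rw [gaussianWeight_mul_latticeCharacter]
  rw [(summable_norm_prod_and_tsum_prod fun i ↦ (summable_thetaTerm hz (α i)).norm).2, norm_prod]

end GaussianMultiplier

section RationalApproximation

lemma exists_coprime_abs_sub_div_le {t : ℝ} (ht₀ : 0 ≤ t) (ht₁ : t ≤ 1) {N : ℕ} (hN : 0 < N) :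
    ∃ a q : ℕ, 0 < q ∧ q ≤ N ∧ a ≤ q ∧ a.Coprime q ∧ |t - a / q| ≤ 1 / ((N + 1) * q) := by
  obtain ⟨r, hr, hden⟩ := Real.exists_rat_abs_sub_le_and_den_le t hN
  have hq : (0 : ℝ) < r.den := mod_cast r.den_pos
  have hclose : |r.den * t - r.num| < 1 := by
    calc |r.den * t - r.num| = r.den * |t - r| := by
          rw [Rat.cast_def, ← abs_of_pos hq, ← abs_mul, abs_of_pos hq, mul_sub,
            mul_div_cancel₀ _ hq.ne']
      _ ≤ r.den * (1 / ((N + 1) * r.den)) := by gcongr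
      _ = 1 / (N + 1) := by field_simp
      _ < 1 := by
          rw [div_lt_one (by positivity)]
          have : (0 : ℝ) < N := mod_cast hN
          linarith
  rw [abs_lt] at hclose
  have hnum₀ : 0 ≤ r.num := by
    have : (-1 : ℝ) < r.num := by nlinarith
    exact Int.lt_iff_add_one_le.1 (mod_cast this)
  obtain ⟨a, ha⟩ := Int.eq_ofNat_of_zero_le hnum₀
  have hcast : (r : ℝ) = a / r.den := by rw [Rat.cast_def, ha, Int.cast_natCast]
  refine ⟨a, r.den, r.den_pos, hden, ?_, by simpa [ha] using r.reduced, hcast ▸ hr⟩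
  have : (a : ℝ) < r.den + 1 := by
    rw [ha, Int.cast_natCast] at hclose
    nlinarith
  exact Nat.lt_succ_iff.1 (mod_cast this)

lemma sq_mul_inv_sq_add_sq_le {q N τ : ℝ} (hq : 0 < q) (hqN : q ≤ N)
    (hτ : |τ| ≤ 1 / ((N + 1) * q)) :
    q ^ 2 * ((N ^ 2)⁻¹ ^ 2 + τ ^ 2) ≤ 2 * (N ^ 2)⁻¹ := by
  have hN : 0 < N := hq.trans_le hqN
  have hreal : q ^ 2 * (N ^ 2)⁻¹ ^ 2 ≤ (N ^ 2)⁻¹ := by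
    calc q ^ 2 * (N ^ 2)⁻¹ ^ 2 ≤ N ^ 2 * (N ^ 2)⁻¹ ^ 2 := by gcongr
      _ = (N ^ 2)⁻¹ := by field_simp
  have himag : q ^ 2 * τ ^ 2 ≤ (N ^ 2)⁻¹ := by
    calc q ^ 2 * τ ^ 2 = (q * |τ|) ^ 2 := by rw [mul_pow, sq_abs]
      _ ≤ (q * (1 / (N * q))) ^ 2 := by
          gcongr
          refine hτ.trans ?_
          gcongr
          linarith
      _ = (N ^ 2)⁻¹ := by field_simp
  linarith

end RationalApproximation

section MajorArcs

/-- The point `N⁻² - i t` on the contour along which lattice spheres of radius about `N` are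
extracted from `gaussianWeight` by integrating over `t ∈ [0, 1]`. -/
def contourPoint (N t : ℝ) : ℂ := ((N ^ 2)⁻¹ : ℝ) - Complex.I * t

lemma contourPoint_re (N t : ℝ) : (contourPoint N t).re = (N ^ 2)⁻¹ := by
  rw [contourPoint, Complex.sub_re, Complex.ofReal_re]
  simp

lemma norm_contourPoint {N : ℝ} (hN : 0 < N) (t : ℝ) :
    ‖contourPoint N t‖ = (N ^ 2)⁻¹ * √(1 + (t * N ^ 2) ^ 2) := by
  have hsq : (N ^ 2)⁻¹ ^ 2 * (1 + (t * N ^ 2) ^ 2) = (N ^ 2)⁻¹ ^ 2 + (-t) ^ 2 := by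
    field_simp
  have hinv : √((N ^ 2)⁻¹ ^ 2) = (N ^ 2)⁻¹ := Real.sqrt_sq (by positivity)
  rw [← hinv, ← Real.sqrt_mul (by positivity), hsq, ← Complex.norm_add_mul_I, contourPoint]
  push_cast
  ring_nf

lemma contourPoint_sub_div (N t : ℝ) (a q : ℕ) :
    contourPoint N (t - a / q) - Complex.I * ((a : ℤ) / q) = contourPoint N t := by
  rw [contourPoint, contourPoint]
  push_cast
  ring

lemma exists_norm_tsum_thetaTerm_le : ∃ K : ℝ, 0 < K ∧ ∀ (a q N : ℕ) (t α L : ℝ),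
    0 < q → q ≤ N → a.Coprime q → |t - a / q| ≤ 1 / ((N + 1) * q) → 0 ≤ L →
    (∀ m : ℤ, L / N ≤ |α - m / q|) →
      ‖∑' m, thetaTerm (contourPoint N t) α m‖ ≤
        K * N * (q : ℝ) ^ (-(1 / 2) : ℝ) *
          (1 + ((t - a / q) * (N : ℝ) ^ 2) ^ 2) ^ (-(1 / 4) : ℝ) *
            Real.exp (-(π / 4) * (L ^ 2 / (1 + ((t - a / q) * (N : ℝ) ^ 2) ^ 2))) := by
  obtain ⟨K, hK, htheta⟩ := exists_norm_tsum_thetaTerm_sub_div_le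
  refine ⟨K, hK, fun a q N t α L hq hqN haq hτ hL hα ↦ ?_⟩
  have : NeZero q := ⟨hq.ne'⟩
  have hN : (0 : ℝ) < N := mod_cast hq.trans_le hqN
  have hzt := contourPoint_sub_div N t a q
  set τ := t - a / q
  set J := 1 + (τ * (N : ℝ) ^ 2) ^ 2 with hJdef
  have hJ : 0 < J := by positivity
  have hz : ‖contourPoint N τ‖ = ((N : ℝ) ^ 2)⁻¹ * √J := norm_contourPoint hN τ
  have hzsq : ‖contourPoint N τ‖ ^ 2 = ((N : ℝ) ^ 2)⁻¹ ^ 2 * J := by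
    rw [hz, mul_pow, Real.sq_sqrt hJ.le]
  have hscale : (q : ℝ) ^ 2 * ‖contourPoint N τ‖ ^ 2 ≤ 2 * (contourPoint N τ).re := by
    rw [contourPoint_re, hzsq]
    refine le_of_eq_of_le ?_ (sq_mul_inv_sq_add_sq_le (mod_cast hq) (mod_cast hqN) hτ)
    rw [hJdef]
    field_simp
  have hsqrt : (√‖contourPoint N τ‖)⁻¹ = N * J ^ (-(1 / 4) : ℝ) := by
    rw [hz, Real.sqrt_mul (by positivity), Real.sqrt_inv, Real.sqrt_sq hN.le, mul_inv, inv_inv,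
      Real.sqrt_eq_rpow, Real.sqrt_eq_rpow, ← Real.rpow_mul hJ.le, ← Real.rpow_neg hJ.le]
    norm_num
  have hexponent : (L / N) ^ 2 * ((contourPoint N τ).re / ‖contourPoint N τ‖ ^ 2) = L ^ 2 / J := by
    rw [contourPoint_re, hzsq]
    field_simp
  have hre : 0 < (contourPoint N τ).re := contourPoint_re N τ ▸ by positivity
  have hmain := htheta (contourPoint N τ) q a α (L / N) hre
    (Nat.isCoprime_iff_coprime.2 haq) hscale (by positivity) hα
  rw [hzt, hsqrt, mul_assoc (-(π / 4)), hexponent, Real.sqrt_eq_rpow,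
    ← Real.rpow_neg (by positivity)] at hmain
  exact hmain.trans_eq (by ring)

lemma exp_neg_mul_sq_div_le {L J : ℝ} (hL : 0 < L) (hJ : 0 < J) :
    Real.exp (-(π / 4) * (L ^ 2 / J)) ≤ 2 / L * J ^ (1 / 2 : ℝ) := by
  set y := L / √J with hy
  have hy₀ : 0 < y := by positivity
  have hsq : L ^ 2 / J = y ^ 2 := by rw [hy, div_pow, Real.sq_sqrt hJ.le]
  have hright : 2 / L * J ^ (1 / 2 : ℝ) = 2 / y := by
    rw [← Real.sqrt_eq_rpow, hy]
    field_simp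
  rw [hsq, hright, le_div_iff₀ hy₀, neg_mul, Real.exp_neg, inv_mul_le_iff₀ (Real.exp_pos _)]
  have hexp := Real.add_one_le_exp (π / 4 * y ^ 2)
  have hpi : 3 / 4 * y ^ 2 ≤ π / 4 * y ^ 2 := by
    gcongr
    exact Real.pi_gt_three.le
  nlinarith [sq_nonneg (y - 1)]

lemma qlcm_ne_zero (j : ℕ) : qlcm j ≠ 0 := by
  simp [qlcm, Finset.lcm_eq_zero_iff]

lemma exists_le_abs_sub_of_notMem_OmegaJK {d j k q : ℕ} (hq : q ∣ qlcm j) {α : Fin d → ℝ}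
    (hα : α ∉ OmegaJK d j k) : ∃ i, ∀ m : ℤ, (2 : ℝ) ^ j / 2 ^ k ≤ |α i - m / q| := by
  by_contra! hclose
  choose m hm using hclose
  obtain ⟨c, hc⟩ := hq
  have hqc : (q : ℝ) * c ≠ 0 := mod_cast hc ▸ qlcm_ne_zero j
  refine hα ⟨fun i ↦ m i * c, fun i ↦ ?_⟩
  rw [zpow_sub₀ two_ne_zero, zpow_natCast, zpow_natCast, hc]
  push_cast
  rw [mul_div_mul_right _ _ (right_ne_zero_of_mul hqc)]
  exact (hm i).le

/-- The gain `O(2^{-j})` that a frequency outside `Ω_{j,k}` yields on the arcs around fractions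
whose denominator `q` divides `q_j`. -/
def arcGain (j q : ℕ) : ℝ := if q ∣ qlcm j then 2 / 2 ^ j else 1

lemma arcGain_pos (j q : ℕ) : 0 < arcGain j q := by
  unfold arcGain
  split_ifs <;> positivity

/-- The decay `(1 + u²)^{-3/4}` in the rescaled distance `u` to the centre of an arc. -/
def arcDecay (u : ℝ) : ℝ := (1 + u ^ 2) ^ (-(3 / 4) : ℝ)

lemma arcDecay_pos (u : ℝ) : 0 < arcDecay u := by
  unfold arcDecay
  positivity

/-- The sum over all Farey arcs of order `N` of the bounds for the Gaussian multiplier at time `t`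
on the individual arcs. -/
def arcMajorant (N j : ℕ) (t : ℝ) : ℝ :=
  ∑ q ∈ Finset.Icc 1 N, ∑ a ∈ Finset.range (q + 1),
    arcGain j q * (q : ℝ) ^ (-(5 / 2) : ℝ) * arcDecay ((t - a / q) * N ^ 2)

lemma le_arcMajorant {N q a : ℕ} (hq : 0 < q) (hqN : q ≤ N) (haq : a ≤ q) (j : ℕ) (t : ℝ) :
    arcGain j q * (q : ℝ) ^ (-(5 / 2) : ℝ) * arcDecay ((t - a / q) * N ^ 2) ≤
      arcMajorant N j t := by
  have hterm (q a : ℕ) :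
      0 ≤ arcGain j q * (q : ℝ) ^ (-(5 / 2) : ℝ) * arcDecay ((t - a / q) * N ^ 2) := by
    have := arcGain_pos j q
    have := arcDecay_pos ((t - a / q) * N ^ 2)
    positivity
  refine (Finset.single_le_sum (f := fun a : ℕ ↦ _ * arcDecay ((t - a / q) * N ^ 2))
    (fun a _ ↦ hterm q a) (Finset.mem_range_succ_iff.2 haq)).trans ?_
  exact Finset.single_le_sum (f := fun q : ℕ ↦ ∑ a ∈ Finset.range (q + 1), _ * _)
    (fun q _ ↦ Finset.sum_nonneg fun a _ ↦ hterm q a) (Finset.mem_Icc.2 ⟨hq, hqN⟩)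

lemma prod_le_pow_card_mul {ι : Type*} [Fintype ι] {x : ι → ℝ} {B g : ℝ}
    (hx₀ : ∀ i, 0 ≤ x i) (hx : ∀ i, x i ≤ B) {i : ι} (hi : x i ≤ B * g) :
    ∏ i, x i ≤ B ^ Fintype.card ι * g := by
  classical
  calc ∏ i, x i = x i * ∏ l ∈ Finset.univ.erase i, x l :=
        (Finset.mul_prod_erase _ _ (Finset.mem_univ i)).symm
    _ ≤ B * g * B ^ (Finset.univ.erase i).card := by
        gcongr
        · exact Finset.prod_nonneg fun l _ ↦ hx₀ l
        · exact (hx₀ i).trans hi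
        · exact (Finset.prod_le_prod (fun l _ ↦ hx₀ l) fun l _ ↦ hx l).trans_eq (by simp)
    _ = B ^ Fintype.card ι * g := by
        rw [mul_right_comm, ← pow_succ', Finset.card_erase_add_one (Finset.mem_univ i),
          Finset.card_univ]

lemma rpow_pow_le {x : ℝ} (hx : 1 ≤ x) {r s : ℝ} {m n : ℕ} (hr : r ≤ 0) (hmn : m ≤ n)
    (hs : r * m = s) : (x ^ r) ^ n ≤ x ^ s := by
  rw [← hs, Real.rpow_mul (by positivity), Real.rpow_natCast]
  exact pow_le_pow_of_le_one (by positivity) (Real.rpow_le_one_of_one_le_of_nonpos hx hr) hmn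

lemma mul_rpow_neg_pow_le {d : ℕ} (hd : 5 ≤ d) {B q J : ℝ} (hB : 0 ≤ B) (hq : 1 ≤ q)
    (hJ : 1 ≤ J) :
    (B * q ^ (-(1 / 2) : ℝ) * J ^ (-(1 / 4) : ℝ)) ^ d ≤
      B ^ d * (q ^ (-(5 / 2) : ℝ) * J ^ (-(5 / 4) : ℝ)) := by
  rw [mul_pow, mul_pow, mul_assoc]
  gcongr
  · exact rpow_pow_le hq (by norm_num) hd (by norm_num)
  · exact rpow_pow_le hJ (by norm_num) hd (by norm_num)

lemma prod_le_pow_mul_arcGain {d j q : ℕ} {x : Fin d → ℝ} {B J : ℝ} (hx₀ : ∀ i, 0 ≤ x i)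
    (hx : ∀ i, x i ≤ B) (hB : 0 ≤ B) (hJ : 1 ≤ J)
    (hgain : q ∣ qlcm j → ∃ i, x i ≤ B * (2 / 2 ^ j * J ^ (1 / 2 : ℝ))) :
    ∏ i, x i ≤ B ^ d * (arcGain j q * J ^ (1 / 2 : ℝ)) := by
  unfold arcGain
  split_ifs with h
  · obtain ⟨i, hi⟩ := hgain h
    simpa using prod_le_pow_card_mul hx₀ hx hi
  · calc ∏ i, x i ≤ B ^ d := (Finset.prod_le_prod (fun i _ ↦ hx₀ i) fun i _ ↦ hx i).trans_eq
          (by simp)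
      _ ≤ B ^ d * (1 * J ^ (1 / 2 : ℝ)) := by
          rw [one_mul]
          exact le_mul_of_one_le_right (by positivity) (Real.one_le_rpow hJ (by norm_num))

lemma exists_norm_tsum_gaussianWeight_mul_latticeCharacter_le {d : ℕ} (hd : 5 ≤ d) :
    ∃ C : ℝ, 0 < C ∧ ∀ (k j : ℕ) (t : ℝ), 0 ≤ t → t ≤ 1 → ∀ α : Fin d → ℝ, α ∉ OmegaJK d j k →
      ‖∑' m, gaussianWeight (contourPoint (2 ^ k) t) m * latticeCharacter α m‖ ≤
        C * (2 ^ k) ^ d * arcMajorant (2 ^ k) j t := by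
  obtain ⟨K, hK, htheta⟩ := exists_norm_tsum_thetaTerm_le
  refine ⟨K ^ d, by positivity, fun k j t ht₀ ht₁ α hα ↦ ?_⟩
  obtain ⟨a, q, hq, hqN, haq, hcop, hτ⟩ :=
    exists_coprime_abs_sub_div_le ht₀ ht₁ (pow_pos two_pos k : 0 < 2 ^ k)
  have hbound (β L : ℝ) := htheta a q (2 ^ k) t β L hq hqN hcop hτ
  push_cast at hbound
  set u : ℝ := (t - a / q) * (2 ^ k) ^ 2 with hu
  set J := 1 + u ^ 2 with hJdef
  have hJ : 1 ≤ J := le_add_of_nonneg_right (sq_nonneg u)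
  have hq₁ : (1 : ℝ) ≤ q := mod_cast hq
  set B := K * 2 ^ k * (q : ℝ) ^ (-(1 / 2) : ℝ) * J ^ (-(1 / 4) : ℝ)
  set x : Fin d → ℝ := fun i ↦ ‖∑' m, thetaTerm (contourPoint (2 ^ k) t) (α i) m‖
  have hfactor (i : Fin d) : x i ≤ B := by
    simpa using hbound (α i) 0 le_rfl (by simp)
  have hgain (h : q ∣ qlcm j) : ∃ i, x i ≤ B * (2 / 2 ^ j * J ^ (1 / 2 : ℝ)) := by
    obtain ⟨i, hi⟩ := exists_le_abs_sub_of_notMem_OmegaJK h hα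
    refine ⟨i, (hbound (α i) (2 ^ j) (by positivity) hi).trans ?_⟩
    gcongr
    exact exp_neg_mul_sq_div_le (by positivity) (by positivity)
  have hB : B ^ d ≤ (K * 2 ^ k) ^ d * ((q : ℝ) ^ (-(5 / 2) : ℝ) * J ^ (-(5 / 4) : ℝ)) :=
    mul_rpow_neg_pow_le hd (by positivity) hq₁ hJ
  calc ‖∑' m, gaussianWeight (contourPoint (2 ^ k) t) m * latticeCharacter α m‖
      = ∏ i, x i := norm_tsum_gaussianWeight_mul_latticeCharacter
        (by rw [contourPoint_re]; positivity) α
    _ ≤ B ^ d * (arcGain j q * J ^ (1 / 2 : ℝ)) :=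
        prod_le_pow_mul_arcGain (fun _ ↦ norm_nonneg _) hfactor (by positivity) hJ hgain
    _ ≤ (K * 2 ^ k) ^ d * ((q : ℝ) ^ (-(5 / 2) : ℝ) * J ^ (-(5 / 4) : ℝ)) *
          (arcGain j q * J ^ (1 / 2 : ℝ)) := by
        have := arcGain_pos j q
        gcongr
    _ = (K * 2 ^ k) ^ d * (arcGain j q * (q : ℝ) ^ (-(5 / 2) : ℝ) * arcDecay u) := by
        rw [arcDecay, ← hJdef, show (-(3 / 4) : ℝ) = -(5 / 4) + 1 / 2 by norm_num,
          Real.rpow_add (by positivity)]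
        ring
    _ ≤ K ^ d * (2 ^ k) ^ d * arcMajorant (2 ^ k) j t := by
        rw [mul_pow]
        gcongr
        simpa [hu] using le_arcMajorant hq hqN haq j t

end MajorArcs

section ExceptionalDenominators

lemma primeCounting_floor_le {x : ℝ} (hx : 1 < x) :
    (Nat.primeCounting ⌊x⌋₊ : ℝ) ≤ (2 * Real.log 4 + 2) * x / Real.log x := by
  have hlog : 0 < Real.log x := Real.log_pos hx
  have hlogSqrt : Real.log √x = Real.log x / 2 := Real.log_sqrt (by positivity)
  have hsqrt : √x ≤ 2 * x / Real.log x := by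
    rw [le_div_iff₀ hlog]
    calc √x * Real.log x = 2 * (√x * Real.log √x) := by rw [hlogSqrt]; ring
      _ ≤ 2 * (√x * √x) := by
          gcongr
          exact Real.log_le_self (by positivity)
      _ = 2 * x := by rw [Real.mul_self_sqrt (by positivity)]
  calc (Nat.primeCounting ⌊x⌋₊ : ℝ) ≤ Real.log 4 * x / Real.log √x + √x :=
        Chebyshev.pi_le_log4_mul_div hx
    _ ≤ Real.log 4 * x / (Real.log x / 2) + 2 * x / Real.log x := by rw [hlogSqrt]; gcongr
    _ = (2 * Real.log 4 + 2) * x / Real.log x := by field_simp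

lemma exists_primeCounting_two_pow_le :
    ∃ C : ℝ, 0 < C ∧ ∀ m : ℕ, m ≠ 0 → (Nat.primeCounting (2 ^ m) : ℝ) ≤ C * 2 ^ m / m := by
  have _log_two_pos : 0 < Real.log 2 := Real.log_pos one_lt_two
  have _log_four_pos : 0 < Real.log 4 := Real.log_pos (by norm_num)
  refine ⟨(2 * Real.log 4 + 2) / Real.log 2, by positivity, fun m hm ↦ ?_⟩
  have h := primeCounting_floor_le (x := 2 ^ m) (one_lt_pow₀ one_lt_two hm)
  rw [← Nat.cast_ofNat, ← Nat.cast_pow, Nat.floor_natCast] at h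
  refine h.trans_eq ?_
  push_cast
  rw [Real.log_pow]
  field_simp

lemma exists_two_pow_mem_dyadic (j : ℕ) {p : ℕ} (hp : 1 < p) :
    ∃ l ≤ p, p ≤ 2 ^ (j + l) ∧ 2 ^ (j + l) ≤ 2 * max p (2 ^ j) := by
  have hclog : Nat.clog 2 p ≤ p := Nat.clog_le_of_le_pow Nat.lt_two_pow_self.le
  refine ⟨Nat.clog 2 p - j, by lia, ?_, ?_⟩
  · exact (Nat.le_pow_clog one_lt_two p).trans (Nat.pow_le_pow_right two_pos (by lia))
  · rcases le_total (Nat.clog 2 p) j with h | h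
    · rw [Nat.sub_eq_zero_of_le h, add_zero]
      lia
    · have hpred := Nat.pow_pred_clog_lt_self one_lt_two hp
      have hsucc : Nat.clog 2 p = (Nat.clog 2 p).pred + 1 :=
        (Nat.succ_pred_eq_of_pos (Nat.clog_pos one_lt_two hp)).symm
      rw [Nat.add_sub_cancel' h, hsucc, pow_succ]
      lia

lemma max_two_pow_rpow_le_sum {s : ℝ} (hs : 0 ≤ s) (j : ℕ) {p N : ℕ} (hp : 1 < p) (hpN : p ≤ N) :
    ((max p (2 ^ j) : ℕ) : ℝ) ^ (-s) ≤ 2 ^ s *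
      ∑ l ∈ Finset.range (N + 1), if p ≤ 2 ^ (j + l) then ((2 : ℝ) ^ (j + l)) ^ (-s) else 0 := by
  obtain ⟨l, hl, hpl, hlp⟩ := exists_two_pow_mem_dyadic j hp
  have hnonneg (l : ℕ) : 0 ≤ if p ≤ 2 ^ (j + l) then ((2 : ℝ) ^ (j + l)) ^ (-s) else 0 := by
    positivity
  have hmem : l ∈ Finset.range (N + 1) := by simp only [Finset.mem_range]; lia
  calc ((max p (2 ^ j) : ℕ) : ℝ) ^ (-s)
      = 2 ^ s * (2 * ((max p (2 ^ j) : ℕ) : ℝ)) ^ (-s) := by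
        rw [Real.mul_rpow zero_le_two (by positivity), ← mul_assoc, ← Real.rpow_add two_pos,
          add_neg_cancel, Real.rpow_zero, one_mul]
    _ ≤ 2 ^ s * ((2 : ℝ) ^ (j + l)) ^ (-s) := by
        gcongr 2 ^ s * ?_
        exact Real.rpow_le_rpow_of_nonpos (by positivity) (mod_cast hlp) (neg_nonpos.2 hs)
    _ ≤ 2 ^ s * ∑ l ∈ Finset.range (N + 1),
          if p ≤ 2 ^ (j + l) then ((2 : ℝ) ^ (j + l)) ^ (-s) else 0 := by
        gcongr
        simpa only [if_pos hpl] using Finset.single_le_sum (fun l _ ↦ hnonneg l) hmem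

lemma card_filter_primesLE_le (N M : ℕ) :
    (N.primesLE.filter (· ≤ M)).card ≤ Nat.primeCounting M := by
  rw [← Nat.primesLE_card_eq_primeCounting]
  refine Finset.card_le_card fun p hp ↦ ?_
  obtain ⟨hpN, hpM⟩ := Finset.mem_filter.1 hp
  exact Nat.mem_primesLE.2 ⟨hpM, (Nat.mem_primesLE.1 hpN).2⟩

lemma exists_sum_primesLE_layer_le : ∃ C : ℝ, 0 < C ∧ ∀ j l N : ℕ, j ≠ 0 →
    ∑ p ∈ N.primesLE, (if p ≤ 2 ^ (j + l) then ((2 : ℝ) ^ (j + l)) ^ (-(3 / 2) : ℝ) else 0) ≤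
      C * (((2 : ℝ) ^ j) ^ (-(1 / 2) : ℝ) / j) * (2 ^ (-(1 / 2) : ℝ)) ^ l := by
  obtain ⟨C, hC, hpi⟩ := exists_primeCounting_two_pow_le
  refine ⟨C, hC, fun j l N hj ↦ ?_⟩
  set y : ℝ := ((2 : ℝ) ^ (j + l)) ^ (-(3 / 2) : ℝ)
  rw [← Finset.sum_filter, Finset.sum_const, nsmul_eq_mul]
  calc ((N.primesLE.filter (· ≤ 2 ^ (j + l))).card : ℝ) * y
      ≤ C * 2 ^ (j + l) / (j + l : ℕ) * y := by
        gcongr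
        exact (Nat.cast_le.2 (card_filter_primesLE_le N _)).trans (hpi _ (by lia))
    _ ≤ C * 2 ^ (j + l) / j * y := by
        gcongr
        lia
    _ = C / j * ((2 : ℝ) ^ (j + l)) ^ (-(1 / 2) : ℝ) := by
        rw [show (-(1 / 2) : ℝ) = 1 + -(3 / 2) by norm_num, Real.rpow_add (by positivity),
          Real.rpow_one]
        ring
    _ = C * (((2 : ℝ) ^ j) ^ (-(1 / 2) : ℝ) / j) * (2 ^ (-(1 / 2) : ℝ)) ^ l := by
        rw [pow_add, Real.mul_rpow (by positivity) (by positivity), Real.rpow_pow_comm zero_le_two]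
        ring

lemma exists_sum_primesLE_max_rpow_le : ∃ C : ℝ, 0 < C ∧ ∀ j N : ℕ, j ≠ 0 →
    ∑ p ∈ N.primesLE, ((max p (2 ^ j) : ℕ) : ℝ) ^ (-(3 / 2) : ℝ) ≤
      C * (((2 : ℝ) ^ j) ^ (-(1 / 2) : ℝ) / j) := by
  obtain ⟨A, hA, hlayer⟩ := exists_sum_primesLE_layer_le
  set r : ℝ := 2 ^ (-(1 / 2) : ℝ)
  have hr₀ : 0 < r := by positivity
  have hr₁ : r < 1 := Real.rpow_lt_one_of_one_lt_of_neg one_lt_two (by norm_num)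
  have hgeom := summable_geometric_of_lt_one hr₀.le hr₁
  refine ⟨2 ^ (3 / 2 : ℝ) * A * ∑' l, r ^ l,
    mul_pos (by positivity) (hgeom.tsum_pos (fun _ ↦ by positivity) 0 (by simp)), fun j N hj ↦ ?_⟩
  calc ∑ p ∈ N.primesLE, ((max p (2 ^ j) : ℕ) : ℝ) ^ (-(3 / 2) : ℝ)
      ≤ 2 ^ (3 / 2 : ℝ) * ∑ l ∈ Finset.range (N + 1), ∑ p ∈ N.primesLE,
          if p ≤ 2 ^ (j + l) then ((2 : ℝ) ^ (j + l)) ^ (-(3 / 2) : ℝ) else 0 := by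
        rw [Finset.sum_comm, Finset.mul_sum]
        refine Finset.sum_le_sum fun p hp ↦ max_two_pow_rpow_le_sum (by norm_num) j ?_ ?_
        exacts [Nat.one_lt_of_mem_primesLE hp, (Nat.mem_primesLE.1 hp).1]
    _ ≤ 2 ^ (3 / 2 : ℝ) *
          ∑ l ∈ Finset.range (N + 1), A * (((2 : ℝ) ^ j) ^ (-(1 / 2) : ℝ) / j) * r ^ l := by
        gcongr with l
        exact hlayer j l N hj
    _ ≤ 2 ^ (3 / 2 : ℝ) * (A * (((2 : ℝ) ^ j) ^ (-(1 / 2) : ℝ) / j) * ∑' l, r ^ l) := by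
        rw [← Finset.mul_sum]
        gcongr
        exact hgeom.sum_le_tsum _ fun _ _ ↦ by positivity
    _ = 2 ^ (3 / 2 : ℝ) * A * (∑' l, r ^ l) * (((2 : ℝ) ^ j) ^ (-(1 / 2) : ℝ) / j) := by ring

/-- The least power of `p` exceeding `x`. -/
def powGT (p x : ℕ) : ℕ := p ^ (Nat.log p x + 1)

lemma max_le_powGT {p : ℕ} (hp : 1 < p) (x : ℕ) : max p x ≤ powGT p x :=
  max_le (Nat.le_self_pow (Nat.succ_ne_zero _) p) (Nat.lt_pow_succ_log_self hp x).le

lemma exists_prime_powGT_dvd {j q : ℕ} (hq : ¬ q ∣ qlcm j) :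
    ∃ p, p.Prime ∧ powGT p (2 ^ j) ∣ q := by
  rw [Nat.dvd_iff_prime_pow_dvd_dvd] at hq
  push Not at hq
  obtain ⟨p, a, hp, hpq, hpj⟩ := hq
  have hlt : 2 ^ j < p ^ a := by
    by_contra! hle
    exact hpj (Finset.dvd_lcm (f := id) (Finset.mem_Icc.2 ⟨Nat.pow_pos hp.pos, hle⟩))
  exact ⟨p, hp, (pow_dvd_pow p (Nat.log_lt_of_lt_pow (by positivity) hlt)).trans hpq⟩

lemma arcGain_le {j q N : ℕ} (hq : q ≠ 0) (hqN : q ≤ N) :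
    arcGain j q ≤ 2 / 2 ^ j + ∑ p ∈ N.primesLE, if powGT p (2 ^ j) ∣ q then 1 else 0 := by
  have hnonneg (p : ℕ) : (0 : ℝ) ≤ if powGT p (2 ^ j) ∣ q then 1 else 0 := by
    split_ifs <;> norm_num
  unfold arcGain
  split_ifs with h
  · exact le_add_of_nonneg_right (Finset.sum_nonneg fun p _ ↦ hnonneg p)
  · obtain ⟨p, hp, hpq⟩ := exists_prime_powGT_dvd h
    have hpN : p ≤ N := (le_max_left p (2 ^ j)).trans
      ((max_le_powGT hp.one_lt _).trans ((Nat.le_of_dvd (Nat.pos_of_ne_zero hq) hpq).trans hqN))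
    refine le_add_of_nonneg_of_le (by positivity) ?_
    simpa only [if_pos hpq] using
      Finset.single_le_sum (fun p _ ↦ hnonneg p) (Nat.mem_primesLE.2 ⟨hpN, hp⟩)

lemma sum_filter_dvd_rpow_le {s : ℝ} (hs : 1 < s) {P : ℕ} (hP : 0 < P) (N : ℕ) :
    ∑ q ∈ Finset.Icc 1 N with P ∣ q, (q : ℝ) ^ (-s) ≤
      (P : ℝ) ^ (-s) * ∑' n : ℕ, (n : ℝ) ^ (-s) := by
  have hsubset : (Finset.Icc 1 N).filter (P ∣ ·) ⊆ (Finset.range (N + 1)).image (P * ·) := by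
    intro q hq
    obtain ⟨hqN, c, rfl⟩ := Finset.mem_filter.1 hq
    have hc : c ≤ P * c := Nat.le_mul_of_pos_left c hP
    exact Finset.mem_image.2 ⟨c, by simp only [Finset.mem_Icc, Finset.mem_range] at *; lia, rfl⟩
  calc ∑ q ∈ Finset.Icc 1 N with P ∣ q, (q : ℝ) ^ (-s)
      ≤ ∑ q ∈ (Finset.range (N + 1)).image (P * ·), (q : ℝ) ^ (-s) :=
        Finset.sum_le_sum_of_subset_of_nonneg hsubset fun _ _ _ ↦ by positivity
    _ = (P : ℝ) ^ (-s) * ∑ c ∈ Finset.range (N + 1), (c : ℝ) ^ (-s) := by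
        rw [Finset.sum_image fun _ _ _ _ h ↦ Nat.eq_of_mul_eq_mul_left hP h, Finset.mul_sum]
        refine Finset.sum_congr rfl fun c _ ↦ ?_
        rw [Nat.cast_mul, Real.mul_rpow (by positivity) (by positivity)]
    _ ≤ (P : ℝ) ^ (-s) * ∑' n : ℕ, (n : ℝ) ^ (-s) := by
        gcongr
        exact (Real.summable_nat_rpow.2 (by linarith)).sum_le_tsum _ fun _ _ ↦ by positivity

lemma sum_filter_powGT_dvd_rpow_le {s : ℝ} (hs : 1 < s) {p x : ℕ} (hp : 1 < p) (N : ℕ) :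
    ∑ q ∈ Finset.Icc 1 N with powGT p x ∣ q, (q : ℝ) ^ (-s) ≤
      ((max p x : ℕ) : ℝ) ^ (-s) * ∑' n : ℕ, (n : ℝ) ^ (-s) := by
  have hmax : 0 < max p x := lt_max_of_lt_left (by lia)
  have hle := max_le_powGT hp x
  refine (sum_filter_dvd_rpow_le hs (hmax.trans_le hle) N).trans ?_
  gcongr ?_ * _
  exact Real.rpow_le_rpow_of_nonpos (mod_cast hmax) (mod_cast hle) (by linarith)

lemma two_div_two_pow_le {j : ℕ} (hj : j ≠ 0) :
    (2 : ℝ) / 2 ^ j ≤ 4 * (((2 : ℝ) ^ j) ^ (-(1 / 2) : ℝ) / j) := by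
  have hchoose : ((j.choose 2 : ℕ) : ℝ) ≤ 2 ^ j := mod_cast Nat.choose_le_two_pow j 2
  have hlt : (j : ℝ) < 2 ^ j := mod_cast Nat.lt_two_pow_self
  have hsqrt : (√(2 ^ j)) ^ 2 = (2 : ℝ) ^ j := Real.sq_sqrt (by positivity)
  have hle : (j : ℝ) ≤ 2 * √(2 ^ j) := by
    rw [Nat.cast_choose_two] at hchoose
    refine (sq_le_sq₀ (by positivity) (by positivity)).1 ?_
    linarith
  have hj₀ : (0 : ℝ) < j := by positivity
  rw [Real.rpow_neg (by positivity), ← Real.sqrt_eq_rpow, ← mul_div_assoc,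
    div_le_div_iff₀ (by positivity) hj₀]
  calc 2 * (j : ℝ) ≤ 2 * (2 * √(2 ^ j)) := by gcongr
    _ = 4 * (√(2 ^ j))⁻¹ * (√(2 ^ j)) ^ 2 := by field_simp; norm_num
    _ = 4 * (√(2 ^ j))⁻¹ * 2 ^ j := by rw [hsqrt]

lemma exists_sum_arcGain_mul_rpow_le : ∃ C : ℝ, 0 < C ∧ ∀ j N : ℕ, j ≠ 0 →
    ∑ q ∈ Finset.Icc 1 N, arcGain j q * (q : ℝ) ^ (-(3 / 2) : ℝ) ≤
      C * (((2 : ℝ) ^ j) ^ (-(1 / 2) : ℝ) / j) := by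
  obtain ⟨A, hA, hprimes⟩ := exists_sum_primesLE_max_rpow_le
  have hsum : Summable fun n : ℕ ↦ (n : ℝ) ^ (-(3 / 2) : ℝ) :=
    Real.summable_nat_rpow.2 (by norm_num)
  set Z := ∑' n : ℕ, (n : ℝ) ^ (-(3 / 2) : ℝ)
  have hZ : 0 < Z := hsum.tsum_pos (fun _ ↦ by positivity) 1 (by simp)
  refine ⟨(4 + A) * Z, by positivity, fun j N hj ↦ ?_⟩
  have hsmooth := two_div_two_pow_le hj
  calc ∑ q ∈ Finset.Icc 1 N, arcGain j q * (q : ℝ) ^ (-(3 / 2) : ℝ)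
      ≤ ∑ q ∈ Finset.Icc 1 N, (2 / 2 ^ j + ∑ p ∈ N.primesLE,
          if powGT p (2 ^ j) ∣ q then 1 else 0) * (q : ℝ) ^ (-(3 / 2) : ℝ) := by
        gcongr with q hq
        obtain ⟨hq, hqN⟩ := Finset.mem_Icc.1 hq
        exact arcGain_le (by lia) hqN
    _ = 2 / 2 ^ j * ∑ q ∈ Finset.Icc 1 N, (q : ℝ) ^ (-(3 / 2) : ℝ) + ∑ p ∈ N.primesLE,
          ∑ q ∈ Finset.Icc 1 N with powGT p (2 ^ j) ∣ q, (q : ℝ) ^ (-(3 / 2) : ℝ) := by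
        simp only [add_mul, Finset.sum_add_distrib, Finset.mul_sum, Finset.sum_mul, ite_mul,
          one_mul, zero_mul, Finset.sum_filter]
        rw [Finset.sum_comm]
    _ ≤ 4 * (((2 : ℝ) ^ j) ^ (-(1 / 2) : ℝ) / j) * Z +
          ∑ p ∈ N.primesLE, ((max p (2 ^ j) : ℕ) : ℝ) ^ (-(3 / 2) : ℝ) * Z := by
        gcongr with p hp
        · exact hsum.sum_le_tsum _ fun _ _ ↦ by positivity
        · exact sum_filter_powGT_dvd_rpow_le (by norm_num) (Nat.one_lt_of_mem_primesLE hp) N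
    _ ≤ 4 * (((2 : ℝ) ^ j) ^ (-(1 / 2) : ℝ) / j) * Z +
          A * (((2 : ℝ) ^ j) ^ (-(1 / 2) : ℝ) / j) * Z := by
        rw [← Finset.sum_mul]
        gcongr
        exact hprimes j N hj
    _ = (4 + A) * Z * (((2 : ℝ) ^ j) ^ (-(1 / 2) : ℝ) / j) := by ring

end ExceptionalDenominators

section ArcIntegrals

open MeasureTheory

@[fun_prop]
lemma continuous_arcDecay : Continuous arcDecay := by
  unfold arcDecay
  exact (by fun_prop : Continuous fun u : ℝ ↦ 1 + u ^ 2).rpow_const fun u ↦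
    Or.inl (by positivity)

lemma integrable_arcDecay : Integrable arcDecay := by
  convert integrable_rpow_neg_one_add_norm_sq (E := ℝ) (μ := volume) (r := 3 / 2)
    (by rw [Module.finrank_self]; norm_num) using 2 with u
  rw [arcDecay, Real.norm_eq_abs, sq_abs]
  norm_num

lemma integral_comp_sub_mul_le {f : ℝ → ℝ} (hf : Integrable f) (hf₀ : ∀ u, 0 ≤ f u) (b : ℝ) {c : ℝ}
    (hc : 0 < c) : ∫ t in (0 : ℝ)..1, f ((t - b) * c) ≤ c⁻¹ * ∫ u, f u := by
  have hint : Integrable fun t ↦ f ((t - b) * c) := (hf.comp_mul_right' hc.ne').comp_sub_right b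
  rw [intervalIntegral.integral_of_le zero_le_one]
  calc ∫ t in Set.Ioc (0 : ℝ) 1, f ((t - b) * c) ≤ ∫ t, f ((t - b) * c) :=
        setIntegral_le_integral hint (Filter.Eventually.of_forall fun t ↦ hf₀ _)
    _ = c⁻¹ * ∫ u, f u := by
        rw [integral_sub_right_eq_self (fun t ↦ f (t * c)) b, Measure.integral_comp_mul_right,
          abs_of_pos (inv_pos.2 hc), smul_eq_mul]

lemma continuous_arcMajorant (N j : ℕ) : Continuous (arcMajorant N j) :=
  continuous_finsetSum _ fun _ _ ↦ continuous_finsetSum _ fun _ _ ↦ by fun_prop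

lemma arcMajorant_pos {N : ℕ} (hN : N ≠ 0) (j : ℕ) (t : ℝ) : 0 < arcMajorant N j t := by
  refine Finset.sum_pos (fun q hq ↦ Finset.sum_pos (fun a _ ↦ ?_) ⟨0, by simp⟩)
    ⟨1, Finset.mem_Icc.2 ⟨le_rfl, Nat.one_le_iff_ne_zero.2 hN⟩⟩
  have hq₀ : (0 : ℝ) < q := mod_cast (Finset.mem_Icc.1 hq).1
  have hgain := arcGain_pos j q
  have hdecay := arcDecay_pos ((t - a / q) * N ^ 2)
  positivity

lemma integral_sum_arcDecay_le {N q : ℕ} (hN : N ≠ 0) (hq : q ≠ 0) :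
    ∫ t in (0 : ℝ)..1, ∑ a ∈ Finset.range (q + 1), arcDecay ((t - a / q) * N ^ 2) ≤
      2 * q * (((N : ℝ) ^ 2)⁻¹ * ∫ u, arcDecay u) := by
  have hI : 0 ≤ ∫ u, arcDecay u := integral_nonneg fun u ↦ (arcDecay_pos u).le
  have hcount : ((q + 1 : ℕ) : ℝ) ≤ 2 * q := mod_cast (by lia : q + 1 ≤ 2 * q)
  calc ∫ t in (0 : ℝ)..1, ∑ a ∈ Finset.range (q + 1), arcDecay ((t - a / q) * N ^ 2)
      = ∑ a ∈ Finset.range (q + 1), ∫ t in (0 : ℝ)..1, arcDecay ((t - a / q) * N ^ 2) :=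
        intervalIntegral.integral_finsetSum fun a _ ↦
          Continuous.intervalIntegrable (by fun_prop) _ _
    _ ≤ ((q + 1 : ℕ) : ℝ) * (((N : ℝ) ^ 2)⁻¹ * ∫ u, arcDecay u) := by
        rw [← nsmul_eq_mul]
        nth_rewrite 2 [← Finset.card_range (q + 1)]
        exact Finset.sum_le_card_nsmul _ _ _ fun a _ ↦ integral_comp_sub_mul_le
          integrable_arcDecay (fun u ↦ (arcDecay_pos u).le) _ (by positivity)
    _ ≤ 2 * q * (((N : ℝ) ^ 2)⁻¹ * ∫ u, arcDecay u) := by gcongr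

lemma exists_integral_arcMajorant_le : ∃ C : ℝ, 0 < C ∧ ∀ N j : ℕ, N ≠ 0 → j ≠ 0 →
    ∫ t in (0 : ℝ)..1, arcMajorant N j t ≤
      C * ((N : ℝ) ^ 2)⁻¹ * (((2 : ℝ) ^ j) ^ (-(1 / 2) : ℝ) / j) := by
  obtain ⟨C, hC, hsum⟩ := exists_sum_arcGain_mul_rpow_le
  have hI : 0 < ∫ u, arcDecay u :=
    integral_pos_of_integrable_nonneg_nonzero continuous_arcDecay integrable_arcDecay
      (fun u ↦ (arcDecay_pos u).le) (arcDecay_pos 0).ne'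
  refine ⟨2 * C * ∫ u, arcDecay u, by positivity, fun N j hN hj ↦ ?_⟩
  simp only [arcMajorant, ← Finset.mul_sum]
  calc ∫ t in (0 : ℝ)..1, ∑ q ∈ Finset.Icc 1 N, arcGain j q * (q : ℝ) ^ (-(5 / 2) : ℝ) *
        ∑ a ∈ Finset.range (q + 1), arcDecay ((t - a / q) * N ^ 2)
      = ∑ q ∈ Finset.Icc 1 N, arcGain j q * (q : ℝ) ^ (-(5 / 2) : ℝ) *
          ∫ t in (0 : ℝ)..1, ∑ a ∈ Finset.range (q + 1), arcDecay ((t - a / q) * N ^ 2) := by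
        rw [intervalIntegral.integral_finsetSum fun q _ ↦
          Continuous.intervalIntegrable (by fun_prop) _ _]
        simp only [intervalIntegral.integral_const_mul]
    _ ≤ ∑ q ∈ Finset.Icc 1 N, 2 * (((N : ℝ) ^ 2)⁻¹ * ∫ u, arcDecay u) *
          (arcGain j q * (q : ℝ) ^ (-(3 / 2) : ℝ)) := by
        refine Finset.sum_le_sum fun q hq ↦ ?_
        have hq₀ : q ≠ 0 := Nat.one_le_iff_ne_zero.1 (Finset.mem_Icc.1 hq).1
        have hqpos : (0 : ℝ) < q := by positivity
        have hgain := arcGain_pos j q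
        refine (mul_le_mul_of_nonneg_left (integral_sum_arcDecay_le hN hq₀)
          (by positivity)).trans_eq ?_
        rw [show (-(3 / 2) : ℝ) = 1 + -(5 / 2) by norm_num, Real.rpow_add hqpos, Real.rpow_one]
        ring
    _ ≤ 2 * (((N : ℝ) ^ 2)⁻¹ * ∫ u, arcDecay u) *
          (C * (((2 : ℝ) ^ j) ^ (-(1 / 2) : ℝ) / j)) := by
        rw [← Finset.mul_sum]
        gcongr
        exact hsum j N hj
    _ = 2 * C * (∫ u, arcDecay u) * ((N : ℝ) ^ 2)⁻¹ * (((2 : ℝ) ^ j) ^ (-(1 / 2) : ℝ) / j) := by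
        ring

end ArcIntegrals

section WeightedMinkowski

open MeasureTheory

variable {Ω : Type*} [MeasurableSpace Ω] {μ : Measure Ω} {M : Ω → ℝ≥0∞}

lemma sq_lintegral_le_lintegral_mul_lintegral_sq_div {T : Ω → ℝ≥0∞} (hT : AEMeasurable T μ)
    (hM : AEMeasurable M μ) (hM₀ : ∀ t, M t ≠ 0) (hM₁ : ∀ t, M t ≠ ∞) :
    (∫⁻ t, T t ∂μ) ^ 2 ≤ (∫⁻ t, M t ∂μ) * ∫⁻ t, T t ^ 2 / M t ∂μ := by
  have hsqrt (t : Ω) : (M t ^ (1 / 2 : ℝ)) ^ (2 : ℝ) = M t := by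
    rw [← ENNReal.rpow_mul]
    norm_num
  have hsplit (t : Ω) : M t ^ (1 / 2 : ℝ) * (T t / M t ^ (1 / 2 : ℝ)) = T t :=
    ENNReal.mul_div_cancel (by simp [hM₀ t]) (by simp [hM₁ t])
  have hquot (t : Ω) : (T t / M t ^ (1 / 2 : ℝ)) ^ (2 : ℝ) = T t ^ 2 / M t := by
    rw [ENNReal.div_rpow_of_nonneg _ _ zero_le_two, hsqrt, ENNReal.rpow_two]
  have hholder := ENNReal.lintegral_mul_le_Lp_mul_Lq μ Real.HolderConjugate.two_two
    (hM.pow_const (1 / 2 : ℝ)) (hT.div (hM.pow_const (1 / 2 : ℝ)))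
  simp only [Pi.mul_apply, Pi.div_apply, hsplit, hsqrt, hquot] at hholder
  calc (∫⁻ t, T t ∂μ) ^ 2
      ≤ ((∫⁻ t, M t ∂μ) ^ (1 / 2 : ℝ) * (∫⁻ t, T t ^ 2 / M t ∂μ) ^ (1 / 2 : ℝ)) ^ 2 := by gcongr
    _ = (∫⁻ t, M t ∂μ) * ∫⁻ t, T t ^ 2 / M t ∂μ := by
        rw [← ENNReal.mul_rpow_of_nonneg _ _ one_half_pos.le, ← ENNReal.rpow_mul_natCast]
        norm_num

lemma tsum_sq_lintegral_le_of_tsum_sq_le {ι : Type*} [Countable ι] {T : ι → Ω → ℝ≥0∞}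
    {S : ℝ≥0∞} (hT : ∀ n, AEMeasurable (T n) μ) (hM : AEMeasurable M μ) (hM₀ : ∀ t, M t ≠ 0)
    (hM₁ : ∀ t, M t ≠ ∞) (h : ∀ᵐ t ∂μ, ∑' n, T n t ^ 2 ≤ M t ^ 2 * S) :
    ∑' n, (∫⁻ t, T n t ∂μ) ^ 2 ≤ (∫⁻ t, M t ∂μ) ^ 2 * S := by
  calc ∑' n, (∫⁻ t, T n t ∂μ) ^ 2
      ≤ ∑' n, (∫⁻ t, M t ∂μ) * ∫⁻ t, T n t ^ 2 / M t ∂μ := ENNReal.tsum_le_tsum fun n ↦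
        sq_lintegral_le_lintegral_mul_lintegral_sq_div (hT n) hM hM₀ hM₁
    _ = (∫⁻ t, M t ∂μ) * ∫⁻ t, ∑' n, T n t ^ 2 / M t ∂μ := by
        rw [ENNReal.tsum_mul_left, lintegral_tsum]
        exact fun n ↦ ((hT n).pow_const 2).div hM
    _ ≤ (∫⁻ t, M t ∂μ) * ∫⁻ t, M t * S ∂μ := by
        gcongr 1
        refine lintegral_mono_ae (h.mono fun t ht ↦ ?_)
        simp only [div_eq_mul_inv]
        rw [ENNReal.tsum_mul_right, ← div_eq_mul_inv]
        refine ENNReal.div_le_of_le_mul (ht.trans_eq ?_)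
        ring
    _ = (∫⁻ t, M t ∂μ) ^ 2 * S := by
        rw [lintegral_mul_const'' _ hM]
        ring

end WeightedMinkowski

section FourierCoefficients

open MeasureTheory

lemma norm_exp_two_pi_mul_I_mul (D : ℤ) (t : ℝ) :
    ‖Complex.exp (2 * π * Complex.I * D * t)‖ = 1 := by
  rw [show (2 * π * Complex.I * D * t : ℂ) = (2 * π * D * t : ℝ) * Complex.I by push_cast; ring,
    Complex.norm_exp_ofReal_mul_I]

lemma integral_exp_two_pi_mul_I_mul (D : ℤ) :
    ∫ t in (0 : ℝ)..1, Complex.exp (2 * π * Complex.I * D * t) = if D = 0 then 1 else 0 := by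
  split_ifs with hD
  · simp [hD]
  · have hne : (2 * π * Complex.I * D : ℂ) ≠ 0 := by simp [hD, Real.pi_ne_zero]
    have hperiod : Complex.exp (2 * π * Complex.I * D * (1 : ℝ)) = 1 :=
      Complex.exp_eq_one_iff.2 ⟨D, by push_cast; ring⟩
    rw [integral_exp_mul_complex hne, hperiod]
    simp

variable {ι : Type*} {g : ι → ℂ}

lemma continuous_tsum_mul_exp_two_pi_mul_I_mul (hg : Summable fun m ↦ ‖g m‖) (D : ι → ℤ) :
    Continuous fun t : ℝ ↦ ∑' m, g m * Complex.exp (2 * π * Complex.I * D m * t) :=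
  continuous_tsum (fun m ↦ by fun_prop) hg fun m t ↦ by
    rw [norm_mul, norm_exp_two_pi_mul_I_mul, mul_one]

lemma integral_exp_mul_tsum_mul_exp [Countable ι] (hg : Summable fun m ↦ ‖g m‖) (D : ι → ℤ)
    (l : ℤ) :
    ∫ t in (0 : ℝ)..1, Complex.exp (2 * π * Complex.I * (-l : ℤ) * t) *
      ∑' m, g m * Complex.exp (2 * π * Complex.I * D m * t) = ∑' m : {m | D m = l}, g m := by
  have hterm (m : ι) (t : ℝ) : Complex.exp (2 * π * Complex.I * (-l : ℤ) * t) *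
      (g m * Complex.exp (2 * π * Complex.I * D m * t)) =
        g m * Complex.exp (2 * π * Complex.I * (D m - l : ℤ) * t) := by
    rw [mul_left_comm, ← Complex.exp_add]
    push_cast
    ring_nf
  have hcoeff (m : ι) : ∫ t in (0 : ℝ)..1, g m * Complex.exp (2 * π * Complex.I * (D m - l : ℤ) * t)
      = {m | D m = l}.indicator g m := by
    rw [intervalIntegral.integral_const_mul, integral_exp_two_pi_mul_I_mul, mul_ite, mul_one,
      mul_zero, Set.indicator_apply]
    simp only [sub_eq_zero, Set.mem_ofPred_eq]
  simp only [← tsum_mul_left, hterm]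
  rw [tsum_subtype, ← tsum_congr hcoeff]
  refine (intervalIntegral.hasSum_integral_of_dominated_convergence (fun m _ ↦ ‖g m‖)
    (fun m ↦ Continuous.aestronglyMeasurable (by fun_prop)) ?_ ?_ (by simp) ?_).tsum_eq.symm
  · exact fun m ↦ .of_forall fun t _ ↦ by rw [norm_mul, norm_exp_two_pi_mul_I_mul, mul_one]
  · exact .of_forall fun t _ ↦ hg
  · refine .of_forall fun t _ ↦ (Summable.of_norm (hg.congr fun m ↦ ?_)).hasSum
    rw [norm_mul, norm_exp_two_pi_mul_I_mul, mul_one]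

lemma norm_tsum_fiber_le_integral [Countable ι] (hg : Summable fun m ↦ ‖g m‖) (D : ι → ℤ) (l : ℤ) :
    ‖∑' m : {m | D m = l}, g m‖ ≤
      ∫ t in (0 : ℝ)..1, ‖∑' m, g m * Complex.exp (2 * π * Complex.I * D m * t)‖ := by
  rw [← integral_exp_mul_tsum_mul_exp hg D l]
  refine (intervalIntegral.norm_integral_le_integral_norm zero_le_one).trans_eq ?_
  simp only [norm_mul, norm_exp_two_pi_mul_I_mul, one_mul]

end FourierCoefficients

section SphericalAverages

open MeasureTheory

variable {d : ℕ}

/-- The convolution of `f` with the Gaussian weight at `contourPoint N t`. Its `l`-th Fourier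
coefficient in `t` is a multiple of the sum of `f` over the sphere of squared radius `l`. -/
def contourConvolution (N t : ℝ) (f : (Fin d → ℤ) → ℂ) (n : Fin d → ℤ) : ℂ :=
  ∑' m, gaussianWeight (contourPoint N t) m * f (n - m)

lemma gaussianWeight_contourPoint (N t : ℝ) (m : Fin d → ℤ) :
    gaussianWeight (contourPoint N t) m =
      Real.exp (-(2 * π * ((N ^ 2)⁻¹ * ∑ i, (m i : ℝ) ^ 2))) *
        Complex.exp (2 * π * Complex.I * (∑ i, m i ^ 2 : ℤ) * t) := by
  rw [gaussianWeight, contourPoint, Complex.ofReal_exp, ← Complex.exp_add]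
  push_cast
  ring_nf

lemma summable_norm_gaussian_mul_comp_sub (N : ℝ) {f : (Fin d → ℤ) → ℂ}
    (hf : Summable fun n ↦ ‖f n‖) (n : Fin d → ℤ) : Summable fun m : Fin d → ℤ ↦
      ‖(Real.exp (-(2 * π * ((N ^ 2)⁻¹ * ∑ i, (m i : ℝ) ^ 2))) : ℂ) * f (n - m)‖ := by
  refine ((Equiv.subLeft n).summable_iff.2 hf).of_nonneg_of_le (fun _ ↦ norm_nonneg _) fun m ↦ ?_
  rw [norm_mul, Complex.norm_real, Real.norm_eq_abs, Real.abs_exp]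
  refine mul_le_of_le_one_left (norm_nonneg _) (Real.exp_le_one_iff.2 (neg_nonpos.2 ?_))
  positivity

lemma contourConvolution_eq_tsum_mul_exp (N t : ℝ) (f : (Fin d → ℤ) → ℂ) (n : Fin d → ℤ) :
    contourConvolution N t f n =
      ∑' m : Fin d → ℤ, Real.exp (-(2 * π * ((N ^ 2)⁻¹ * ∑ i, (m i : ℝ) ^ 2))) * f (n - m) *
        Complex.exp (2 * π * Complex.I * (∑ i, m i ^ 2 : ℤ) * t) := by
  refine tsum_congr fun m ↦ ?_
  rw [gaussianWeight_contourPoint]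
  ring

lemma continuous_contourConvolution (N : ℝ) {f : (Fin d → ℤ) → ℂ} (hf : Summable fun n ↦ ‖f n‖)
    (n : Fin d → ℤ) : Continuous fun t ↦ contourConvolution N t f n := by
  simp only [contourConvolution_eq_tsum_mul_exp]
  exact continuous_tsum_mul_exp_two_pi_mul_I_mul (summable_norm_gaussian_mul_comp_sub N hf n) _

lemma norm_tsum_latticeSphere_le (N : ℝ) {f : (Fin d → ℤ) → ℂ} (hf : Summable fun n ↦ ‖f n‖)
    (n : Fin d → ℤ) (l : ℤ) :
    ‖∑' m : latticeSphere d l, f (n - m)‖ ≤ Real.exp (2 * π * ((N ^ 2)⁻¹ * l)) *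
      ∫ t in (0 : ℝ)..1, ‖contourConvolution N t f n‖ := by
  have hsphere (m : latticeSphere d l) : ∑ i, ((m : Fin d → ℤ) i : ℝ) ^ 2 = l := mod_cast m.2
  have h := norm_tsum_fiber_le_integral (summable_norm_gaussian_mul_comp_sub N hf n)
    (fun m ↦ ∑ i, m i ^ 2) l
  simp only [← contourConvolution_eq_tsum_mul_exp] at h
  rw [← inv_mul_le_iff₀ (Real.exp_pos _), ← Real.exp_neg]
  refine Eq.trans_le ?_ h
  rw [← abs_of_pos (Real.exp_pos _), ← Real.norm_eq_abs, ← Complex.norm_real, ← norm_mul,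
    ← tsum_mul_left]
  exact congrArg _ (tsum_congr fun m ↦ by rw [hsphere m])

lemma sph_eq_latticeSphere {lam : ℝ} {l : ℕ} (h : (l : ℝ) = lam ^ 2) :
    sph d lam = latticeSphere d l := by
  ext m
  change nsq m = lam ^ 2 ↔ ∑ i, m i ^ 2 = (l : ℤ)
  rw [nsq, ← h]
  exact_mod_cast Iff.rfl

lemma exists_pow_le_Nlam (hd : 5 ≤ d) : ∃ c : ℝ, 0 < c ∧ ∀ lam : ℝ, 0 < lam →
    (∃ l : ℕ, (l : ℝ) = lam ^ 2) → c * lam ^ (d - 2) ≤ Nlam d lam := by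
  obtain ⟨c, hc, hcard⟩ := exists_rpow_le_ncard_latticeSphere hd
  refine ⟨c, hc, fun lam hlam ⟨l, hl⟩ ↦ ?_⟩
  have hl₀ : l ≠ 0 := by
    rintro rfl
    exact (pow_pos hlam 2).ne (mod_cast hl)
  rw [Nlam, sph_eq_latticeSphere hl]
  refine Eq.trans_le ?_ (hcard l hl₀)
  rw [hl, ← Real.rpow_natCast lam 2, ← Real.rpow_mul hlam.le, ← Real.rpow_natCast lam (d - 2),
    Nat.cast_sub (by lia)]
  push_cast
  ring_nf

lemma norm_Avg_le {lam : ℝ} (hlam : ∃ l : ℕ, (l : ℝ) = lam ^ 2) (N : ℝ)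
    {f : (Fin d → ℤ) → ℝ} (hf : Summable fun n ↦ ‖(f n : ℂ)‖) (n : Fin d → ℤ) :
    ‖Avg lam f n‖ ≤ (Nlam d lam : ℝ)⁻¹ * (Real.exp (2 * π * ((N ^ 2)⁻¹ * lam ^ 2)) *
      ∫ t in (0 : ℝ)..1, ‖contourConvolution N t (fun n ↦ (f n : ℂ)) n‖) := by
  obtain ⟨l, hl⟩ := hlam
  rw [Avg, norm_mul, norm_inv, Real.norm_natCast, ← hl, ← Complex.norm_real, Complex.ofReal_tsum,
    sph_eq_latticeSphere hl]
  gcongr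
  exact_mod_cast norm_tsum_latticeSphere_le N hf n l

lemma exists_enorm_Avg_le (hd : 5 ≤ d) : ∃ A : ℝ, 0 < A ∧ ∀ N lam : ℝ, 0 < N → N ≤ lam →
    lam ≤ 2 * N → (∃ l : ℕ, (l : ℝ) = lam ^ 2) → ∀ f : (Fin d → ℤ) → ℝ,
      Summable (fun n ↦ ‖(f n : ℂ)‖) → ∀ n, ‖Avg lam f n‖ₑ ≤ ENNReal.ofReal (A / N ^ (d - 2)) *
        ∫⁻ t in Set.Ioc (0 : ℝ) 1, ‖contourConvolution N t (fun n ↦ (f n : ℂ)) n‖ₑ := by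
  obtain ⟨c, hc, hcard⟩ := exists_pow_le_Nlam hd
  refine ⟨Real.exp (8 * π) / c, by positivity, fun N lam hN hlam hlam' hl f hf n ↦ ?_⟩
  have hlam₀ : 0 < lam := hN.trans_le hlam
  have hNlam : c * N ^ (d - 2) ≤ Nlam d lam := by
    refine le_trans ?_ (hcard lam hlam₀ hl)
    gcongr
  have hratio : 2 * π * ((N ^ 2)⁻¹ * lam ^ 2) ≤ 8 * π := by
    have hsq : (N ^ 2)⁻¹ * lam ^ 2 ≤ 4 := by
      rw [inv_mul_le_iff₀ (by positivity)]
      calc lam ^ 2 ≤ (2 * N) ^ 2 := by gcongr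
        _ = N ^ 2 * 4 := by ring
    calc 2 * π * ((N ^ 2)⁻¹ * lam ^ 2) ≤ 2 * π * 4 := by gcongr
      _ = 8 * π := by ring
  have hint : IntegrableOn (fun t ↦ contourConvolution N t (fun n ↦ (f n : ℂ)) n) (Set.Ioc 0 1) :=
    (continuous_contourConvolution N hf n).integrableOn_Ioc
  rw [← ofReal_integral_norm_eq_lintegral_enorm hint, ← ENNReal.ofReal_mul (by positivity),
    ← ofReal_norm, ← intervalIntegral.integral_of_le zero_le_one]
  refine ENNReal.ofReal_le_ofReal ((norm_Avg_le hl N hf n).trans ?_)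
  have hI : 0 ≤ ∫ t in (0 : ℝ)..1, ‖contourConvolution N t (fun n ↦ (f n : ℂ)) n‖ :=
    intervalIntegral.integral_nonneg zero_le_one fun _ _ ↦ norm_nonneg _
  calc (Nlam d lam : ℝ)⁻¹ * (Real.exp (2 * π * ((N ^ 2)⁻¹ * lam ^ 2)) *
        ∫ t in (0 : ℝ)..1, ‖contourConvolution N t (fun n ↦ (f n : ℂ)) n‖)
      ≤ (c * N ^ (d - 2))⁻¹ * (Real.exp (8 * π) *
        ∫ t in (0 : ℝ)..1, ‖contourConvolution N t (fun n ↦ (f n : ℂ)) n‖) := by gcongr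
    _ = Real.exp (8 * π) / c / N ^ (d - 2) *
        ∫ t in (0 : ℝ)..1, ‖contourConvolution N t (fun n ↦ (f n : ℂ)) n‖ := by field_simp

end SphericalAverages

section MaximalFunction

open MeasureTheory

variable {d : ℕ}

lemma zero_mem_OmegaJK (d j k : ℕ) : (0 : Fin d → ℝ) ∈ OmegaJK d j k :=
  ⟨0, fun i ↦ by simp only [Pi.zero_apply, Int.cast_zero, zero_div, sub_zero, abs_zero]; positivity⟩

lemma summable_norm_of_hasSum_latticeCharacter_zero {f : (Fin d → ℤ) → ℂ} {a : ℂ}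
    (h : HasSum (fun n ↦ f n * latticeCharacter 0 n) a) : Summable fun n ↦ ‖f n‖ :=
  h.summable.norm.congr fun n ↦ norm_mul_latticeCharacter f 0 n

lemma tsum_enorm_sq_eq_ofReal {ι E : Type*} [SeminormedAddCommGroup E] {g : ι → E}
    (hg : Summable fun n ↦ ‖g n‖ ^ 2) : ∑' n, ‖g n‖ₑ ^ 2 = ENNReal.ofReal (∑' n, ‖g n‖ ^ 2) := by
  rw [ENNReal.ofReal_tsum_of_nonneg (fun n ↦ by positivity) hg]
  exact tsum_congr fun n ↦ by rw [ENNReal.ofReal_pow (norm_nonneg _), ofReal_norm]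

lemma summable_norm_sq_of_summable_norm {ι E : Type*} [SeminormedAddCommGroup E] {g : ι → E}
    (hg : Summable fun n ↦ ‖g n‖) : Summable fun n ↦ ‖g n‖ ^ 2 := by
  have hprod := hg.mul_of_nonneg hg (fun _ ↦ norm_nonneg _) fun _ ↦ norm_nonneg _
  simpa only [sq] using! hprod.comp_injective (i := fun n ↦ (n, n)) fun _ _ h ↦ (Prod.ext_iff.1 h).1

lemma exists_tsum_enorm_contourConvolution_sq_le (hd : 5 ≤ d) : ∃ C : ℝ, 0 < C ∧
    ∀ (k j : ℕ) (f : (Fin d → ℤ) → ℂ),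
      (∀ α ∈ OmegaJK d j k, HasSum (fun n ↦ f n * latticeCharacter α n) 0) →
      ∀ t ∈ Set.Ioc (0 : ℝ) 1, ∑' n, ‖contourConvolution (2 ^ k) t f n‖ₑ ^ 2 ≤
        ENNReal.ofReal (C * (2 ^ k) ^ d * arcMajorant (2 ^ k) j t) ^ 2 * ∑' n, ‖f n‖ₑ ^ 2 := by
  obtain ⟨C, hC, hmult⟩ := exists_norm_tsum_gaussianWeight_mul_latticeCharacter_le hd
  refine ⟨C, hC, fun k j f hf t ht ↦ ?_⟩
  have hmajorant := arcMajorant_pos (N := 2 ^ k) (by positivity) j t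
  have hf₁ := summable_norm_of_hasSum_latticeCharacter_zero (hf 0 (zero_mem_OmegaJK d j k))
  obtain ⟨hsum, hle⟩ := tsum_norm_convolution_sq_le
    (summable_norm_gaussianWeight (z := contourPoint (2 ^ k) t)
      (by rw [contourPoint_re]; positivity)) hf₁
    fun α hα ↦ hmult k j t ht.1.le ht.2 α fun hmem ↦ hα (hf α hmem).tsum_eq
  calc ∑' n, ‖contourConvolution (2 ^ k) t f n‖ₑ ^ 2
      = ENNReal.ofReal (∑' n, ‖contourConvolution (2 ^ k) t f n‖ ^ 2) :=
        tsum_enorm_sq_eq_ofReal hsum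
    _ ≤ ENNReal.ofReal ((C * (2 ^ k) ^ d * arcMajorant (2 ^ k) j t) ^ 2 * ∑' n, ‖f n‖ ^ 2) :=
        ENNReal.ofReal_le_ofReal hle
    _ = ENNReal.ofReal (C * (2 ^ k) ^ d * arcMajorant (2 ^ k) j t) ^ 2 * ∑' n, ‖f n‖ₑ ^ 2 := by
        rw [ENNReal.ofReal_mul (by positivity), ENNReal.ofReal_pow (by positivity),
          tsum_enorm_sq_eq_ofReal (summable_norm_sq_of_summable_norm hf₁)]

lemma exists_tsum_sq_lintegral_contourConvolution_le (hd : 5 ≤ d) : ∃ C : ℝ, 0 < C ∧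
    ∀ (k j : ℕ), j ≠ 0 → ∀ f : (Fin d → ℤ) → ℂ,
      (∀ α ∈ OmegaJK d j k, HasSum (fun n ↦ f n * latticeCharacter α n) 0) →
      ∑' n, (∫⁻ t in Set.Ioc (0 : ℝ) 1, ‖contourConvolution (2 ^ k) t f n‖ₑ) ^ 2 ≤
        ENNReal.ofReal (C * (2 ^ k) ^ (d - 2) * (((2 : ℝ) ^ j) ^ (-(1 / 2) : ℝ) / j)) ^ 2 *
          ∑' n, ‖f n‖ₑ ^ 2 := by
  obtain ⟨B, hB, hconv⟩ := exists_tsum_enorm_contourConvolution_sq_le hd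
  obtain ⟨C, hC, hint⟩ := exists_integral_arcMajorant_le
  refine ⟨B * C, by positivity, fun k j hj f hf ↦ ?_⟩
  let M (t : ℝ) : ℝ := B * (2 ^ k) ^ d * arcMajorant (2 ^ k) j t
  have hM₀ (t : ℝ) : 0 < M t :=
    mul_pos (by positivity) (arcMajorant_pos (N := 2 ^ k) (by positivity) j t)
  have hMcont : Continuous M := continuous_const.mul (continuous_arcMajorant (2 ^ k) j)
  have hf₁ := summable_norm_of_hasSum_latticeCharacter_zero (hf 0 (zero_mem_OmegaJK d j k))
  have hMint : ∫⁻ t in Set.Ioc (0 : ℝ) 1, ENNReal.ofReal (M t) ≤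
      ENNReal.ofReal (B * C * (2 ^ k) ^ (d - 2) * (((2 : ℝ) ^ j) ^ (-(1 / 2) : ℝ) / j)) := by
    rw [← ofReal_integral_eq_lintegral_ofReal hMcont.integrableOn_Ioc
      (.of_forall fun t ↦ (hM₀ t).le), ← intervalIntegral.integral_of_le zero_le_one,
      intervalIntegral.integral_const_mul]
    refine ENNReal.ofReal_le_ofReal ?_
    calc B * (2 ^ k) ^ d * ∫ t in (0 : ℝ)..1, arcMajorant (2 ^ k) j t
        ≤ B * (2 ^ k) ^ d * (C * (((2 ^ k : ℕ) : ℝ) ^ 2)⁻¹ *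
            (((2 : ℝ) ^ j) ^ (-(1 / 2) : ℝ) / j)) := by
          gcongr
          exact hint _ j (by positivity) hj
      _ = B * C * (2 ^ k) ^ (d - 2) * (((2 : ℝ) ^ j) ^ (-(1 / 2) : ℝ) / j) := by
          rw [pow_sub₀ _ (by positivity) (by lia : 2 ≤ d)]
          push_cast
          ring
  refine (tsum_sq_lintegral_le_of_tsum_sq_le
    (fun n ↦ (continuous_contourConvolution _ hf₁ n).enorm.aemeasurable)
    hMcont.measurable.ennreal_ofReal.aemeasurable
    (fun t ↦ (ENNReal.ofReal_pos.2 (hM₀ t)).ne') (fun t ↦ ENNReal.ofReal_ne_top)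
    ((ae_restrict_iff' measurableSet_Ioc).2 (.of_forall (hconv k j f hf)))).trans ?_
  gcongr

lemma two_pow_rpow_neg_half (j : ℕ) : ((2 : ℝ) ^ j) ^ (-(1 / 2) : ℝ) = 2 ^ (-(j : ℝ) / 2) := by
  rw [← Real.rpow_natCast, ← Real.rpow_mul zero_le_two]
  ring_nf

lemma l2norm_eq_tsum_enorm_ofReal (f : (Fin d → ℤ) → ℝ) :
    l2norm f = (∑' n, ‖(f n : ℂ)‖ₑ ^ 2) ^ ((1 : ℝ) / 2) := by
  simp only [l2norm, ← ofReal_norm, Complex.norm_real]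
  simp only [ofReal_norm, enorm_eq_nnnorm]

lemma rpow_half_le_mul_rpow_half {x a S : ℝ≥0∞} (h : x ≤ a ^ 2 * S) :
    x ^ ((1 : ℝ) / 2) ≤ a * S ^ ((1 : ℝ) / 2) := by
  refine (ENNReal.rpow_le_rpow h one_half_pos.le).trans_eq ?_
  rw [ENNReal.mul_rpow_of_nonneg _ _ one_half_pos.le, ← ENNReal.rpow_natCast_mul]
  norm_num

end MaximalFunction

theorem single_scale_maximal_estimate_general (d : ℕ) (hd : 5 ≤ d) :
    ∃ C : ℝ, 0 < C ∧ ∀ (k j : ℕ), 1 ≤ j →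
      ∀ f : (Fin d → ℤ) → ℝ,
        (∀ α ∈ OmegaJK d j k,
          HasSum (fun n : Fin d → ℤ =>
            (f n : ℂ) * Complex.exp (-(2 * (π : ℂ) * Complex.I) * (∑ i, (n i : ℝ) * α i))) 0) →
        (∑' n : Fin d → ℤ,
            (⨆ (lam : ℝ) (_ : (2 : ℝ) ^ k ≤ lam ∧ lam ≤ (2 : ℝ) ^ (k + 1) ∧
                ∃ N : ℕ, (N : ℝ) = lam ^ 2),
              (‖Avg lam f n‖₊ : ℝ≥0∞)) ^ 2) ^ ((1 : ℝ) / 2)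
          ≤ ENNReal.ofReal (C * (2 : ℝ) ^ (-(j : ℝ) / 2) / (j : ℝ)) * l2norm f := by
  obtain ⟨A, hA, hAvg⟩ := exists_enorm_Avg_le hd
  obtain ⟨C, hC, hconv⟩ := exists_tsum_sq_lintegral_contourConvolution_le hd
  refine ⟨A * C, by positivity, fun k j hj f hf ↦ ?_⟩
  have hf₁ := summable_norm_of_hasSum_latticeCharacter_zero (hf 0 (zero_mem_OmegaJK d j k))
  set S := ∑' n, ‖(f n : ℂ)‖ₑ ^ 2
  set a := ENNReal.ofReal (A / (2 ^ k) ^ (d - 2))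
  set b := ENNReal.ofReal (C * (2 ^ k) ^ (d - 2) * (((2 : ℝ) ^ j) ^ (-(1 / 2) : ℝ) / j))
  have hab : ENNReal.ofReal (A * C * 2 ^ (-(j : ℝ) / 2) / j) = a * b := by
    rw [← ENNReal.ofReal_mul (by positivity), two_pow_rpow_neg_half]
    field_simp
  rw [hab, l2norm_eq_tsum_enorm_ofReal]
  refine rpow_half_le_mul_rpow_half ?_
  calc _ ≤ ∑' n, (a * ∫⁻ t in Set.Ioc (0 : ℝ) 1,
          ‖contourConvolution (2 ^ k) t (fun n ↦ (f n : ℂ)) n‖ₑ) ^ 2 := by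
        gcongr with n
        exact iSup₂_le fun lam hlam ↦ hAvg _ lam (by positivity) hlam.1
          (hlam.2.1.trans_eq (pow_succ' 2 k)) hlam.2.2 f hf₁ n
    _ ≤ (a * b) ^ 2 * S := by
        simp only [mul_pow, ENNReal.tsum_mul_left, mul_assoc]
        gcongr
        exact hconv k j (by lia) _ hf

/-- **Proposition 1**: for `d ≥ 5` there is a constant `C_d` such that for all `k ∈ ℕ`,
`1 ≤ j ≤ log₂(k) - 2`, and every `f ∈ ℓ²(ℤ^d)` whose Fourier transform vanishes on
`Ω_{j,k}` (i.e. is supported in the complement), one has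
`‖sup_{2^k ≤ λ ≤ 2^{k+1}} |A_λ f|‖₂ ≤ C_d 2^{-j/2} j⁻¹ ‖f‖₂`. -/
theorem single_scale_maximal_estimate (d : ℕ) (hd : 5 ≤ d) :
    ∃ C : ℝ, 0 < C ∧ ∀ (k j : ℕ), 1 ≤ j → (j : ℝ) ≤ Real.logb 2 (k : ℝ) - 2 →
      ∀ f : (Fin d → ℤ) → ℝ,
        (∀ α ∈ OmegaJK d j k,
          HasSum (fun n : Fin d → ℤ =>
            (f n : ℂ) * Complex.exp (-(2 * (π : ℂ) * Complex.I) * (∑ i, (n i : ℝ) * α i))) 0) →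
        (∑' n : Fin d → ℤ,
            (⨆ (lam : ℝ) (_ : (2 : ℝ) ^ k ≤ lam ∧ lam ≤ (2 : ℝ) ^ (k + 1) ∧
                ∃ N : ℕ, (N : ℝ) = lam ^ 2),
              (‖Avg lam f n‖₊ : ℝ≥0∞)) ^ 2) ^ ((1 : ℝ) / 2)
          ≤ ENNReal.ofReal (C * (2 : ℝ) ^ (-(j : ℝ) / 2) / (j : ℝ)) * l2norm f := by
  obtain ⟨C, hC, h⟩ := single_scale_maximal_estimate_general d hd
  exact ⟨C, hC, fun k j hj _ f hf ↦ h k j hj f hf⟩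
end
end

section
/- Let $d\ge 1$, $k\in\mathbb{N}$, and set $\varepsilon=2^{-2k}$. For $t\in\mathbb{R}$ define $s_t:\mathbb{Z}^d\to\mathbb{C}$ by $s_t(m)=e^{2\pi i|m|^2(t+i\varepsilon)}$ and let $\widehat{s_t}(\alpha)=\sum_{m\in\mathbb{Z}^d}s_t(m)e^{-2\pi i m\cdot\alpha}$. There is a constant $C_d$ such that: if $1\le a\le q\le 2^k$ with $\gcd(a,q)=1$, $t=a/q+\tau$ with $|\tau|\le 2^{-k}q^{-1}$, then for every $\alpha\in\mathbb{R}^d$, $|\widehat{s_t}(\alpha)|\le C_d\, q^{-d/2}(\varepsilon+|\tau|)^{-d/2}\sum_{\ell\in\mathbb{Z}^d}e^{-\frac{\pi}{2}|\alpha-\ell/q|^2/(\varepsilon+\varepsilon^{-1}|\tau|^2)}$. -/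
open scoped BigOperators Real

noncomputable section

/-- `s_t(m) = e^{2πi|m|²(t+iε)}`. -/
def sFun {d : ℕ} (ε t : ℝ) (m : Fin d → ℤ) : ℂ :=
  Complex.exp (2 * (π : ℂ) * Complex.I * (nsq m : ℝ) * ((t : ℂ) + Complex.I * (ε : ℝ)))

/-- The Fourier transform `ŝ_t(α) = ∑_m s_t(m) e^{-2πi m·α}`. -/
def sHat {d : ℕ} (ε t : ℝ) (α : Fin d → ℝ) : ℂ :=
  ∑' m : Fin d → ℤ,
    sFun ε t m * Complex.exp (-(2 * (π : ℂ) * Complex.I) * (∑ i, (m i : ℝ) * α i))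

/-! The sum defining `ŝ_t(α)` factors over the coordinates into Jacobi theta values
`θ(-αᵢ, 2(t + iε))`. At `t = a/q + τ` the general term of the theta series is that of
`θ(-αᵢ, 2(τ + iε))` times the `q`-periodic weight `e(a m²/q)`. Expanding this weight in characters
mod `q` and applying the theta functional equation (Poisson summation) to each of them gives a sum
of Gaussians centred at the points `ℓ/q`, whose coefficients are quadratic Gauss sums mod `q`.
Weyl differencing bounds these by `√(2q)`, and the dual Gaussians decay at rate
`Re (i/(τ + iε)) = 1/(ε + ε⁻¹τ²)`. -/

section ProductSums

open Filter Topology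

variable {R ι : Type*} [NormedCommRing R] [NormOneClass R] [Fintype ι] {κ : ι → Type*}
  {f : ∀ i, κ i → R}

theorem summable_norm_prod_pi (hf : ∀ i, Summable fun k ↦ ‖f i k‖) :
    Summable fun m : ∀ i, κ i ↦ ‖∏ i, f i (m i)‖ := by
  classical
  refine summable_of_sum_le (c := ∏ i, ∑' k, ‖f i k‖) (fun _ ↦ norm_nonneg _) fun s ↦ ?_
  have subset_box : s ⊆ Fintype.piFinset fun i ↦ s.image (· i) := fun m hm ↦
    Fintype.mem_piFinset.mpr fun i ↦ Finset.mem_image_of_mem (· i) hm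
  calc ∑ m ∈ s, ‖∏ i, f i (m i)‖
      ≤ ∑ m ∈ s, ∏ i, ‖f i (m i)‖ := Finset.sum_le_sum fun m _ ↦ Finset.norm_prod_le _ _
    _ ≤ ∑ m ∈ Fintype.piFinset fun i ↦ s.image (· i), ∏ i, ‖f i (m i)‖ := by gcongr
    _ = ∏ i, ∑ k ∈ s.image (· i), ‖f i k‖ := (Finset.prod_univ_sum _ fun i k ↦ ‖f i k‖).symm
    _ ≤ ∏ i, ∑' k, ‖f i k‖ := by
        gcongr with i
        exact (hf i).sum_le_tsum _ fun _ _ ↦ norm_nonneg _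

theorem tsum_prod_pi [CompleteSpace R] (hf : ∀ i, Summable fun k ↦ ‖f i k‖) :
    ∑' m : ∀ i, κ i, ∏ i, f i (m i) = ∏ i, ∑' k, f i k := by
  classical
  have tendsto_box : Tendsto (Fintype.piFinset (α := ι) (δ := κ)) .atTop .atTop :=
    tendsto_atTop_atTop.mpr fun s ↦ ⟨fun i ↦ s.image (· i), fun t ht m hm ↦
      Fintype.mem_piFinset.mpr fun i ↦ ht i (Finset.mem_image_of_mem (· i) hm)⟩
  have tendsto_eval (i : ι) : Tendsto (fun t : ∀ i, Finset (κ i) ↦ t i) .atTop .atTop :=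
    (Function.monotone_eval i).tendsto_atTop_atTop fun s ↦
      ⟨Function.update (fun _ ↦ ∅) i s, by rw [Function.eval, Function.update_self]⟩
  have tendsto_sum := (summable_norm_prod_pi hf).of_norm.hasSum.comp tendsto_box
  have tendsto_prod : Tendsto (fun t : ∀ i, Finset (κ i) ↦ ∏ i, ∑ k ∈ t i, f i k) .atTop
      (𝓝 (∏ i, ∑' k, f i k)) :=
    tendsto_finsetProd _ fun i _ ↦ (hf i).of_norm.hasSum.comp (tendsto_eval i)
  refine tendsto_nhds_unique tendsto_sum (tendsto_prod.congr fun t ↦ ?_)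
  exact Finset.prod_univ_sum ..

end ProductSums

section QuadraticGaussSum

open ComplexConjugate
open scoped Finset

variable {R : Type*} [CommRing R] [Fintype R]

/-- The generalized quadratic Gauss sum `∑ r, ψ(a r² + b r)` of an additive character `ψ`. -/
def quadraticGaussSum (ψ : AddChar R ℂ) (a b : R) : ℂ := ∑ r, ψ (a * r ^ 2 + b * r)

variable [DecidableEq R] {ψ : AddChar R ℂ}

-- Weyl differencing: after the substitution `r = s + h` the sum over `s` is linear in the exponent.
theorem quadraticGaussSum_mul_conj_s5 (hψ : ψ.IsPrimitive) (a b : R) :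
    quadraticGaussSum ψ a b * conj (quadraticGaussSum ψ a b) =
      ∑ h, ψ (a * h ^ 2 + b * h) * if 2 * a * h = 0 then (Fintype.card R : ℂ) else 0 := by
  have differencing (s : R) : ∑ r, ψ (a * r ^ 2 + b * r) * conj (ψ (a * s ^ 2 + b * s)) =
      ∑ h, ψ (a * h ^ 2 + b * h) * ψ (s * (2 * a * h)) := by
    rw [← Equiv.sum_comp (Equiv.addRight s)]
    refine Finset.sum_congr rfl fun h _ ↦ ?_
    rw [← AddChar.map_neg_eq_conj, ← AddChar.map_add_eq_mul, ← AddChar.map_add_eq_mul,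
      Equiv.coe_addRight]
    ring_nf
  simp_rw [quadraticGaussSum, map_sum, Finset.sum_mul_sum]
  rw [Finset.sum_comm]
  simp_rw [differencing]
  rw [Finset.sum_comm]
  simp_rw [← Finset.mul_sum, AddChar.sum_mulShift _ hψ]
  push_cast
  rfl

theorem norm_quadraticGaussSum_sq_le_s5 (hψ : ψ.IsPrimitive) {a : R} (ha : IsUnit a) (b : R) :
    ‖quadraticGaussSum ψ a b‖ ^ 2 ≤ #{h : R | 2 * h = 0} * Fintype.card R := by
  have two_mul_unit (h : R) : 2 * a * h = 0 ↔ 2 * h = 0 := by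
    rw [mul_right_comm, mul_comm, ha.mul_right_eq_zero]
  calc ‖quadraticGaussSum ψ a b‖ ^ 2
      = ‖quadraticGaussSum ψ a b * conj (quadraticGaussSum ψ a b)‖ := by
        rw [norm_mul, RCLike.norm_conj, sq]
    _ ≤ ∑ h, ‖ψ (a * h ^ 2 + b * h) * if 2 * a * h = 0 then (Fintype.card R : ℂ) else 0‖ := by
        rw [quadraticGaussSum_mul_conj_s5 hψ]
        exact norm_sum_le _ _
    _ = ∑ h : R, if 2 * h = 0 then (Fintype.card R : ℝ) else 0 := by
        simp only [norm_mul, AddChar.norm_apply, one_mul, two_mul_unit, apply_ite norm,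
          Complex.norm_natCast, norm_zero]
    _ = #{h : R | 2 * h = 0} * Fintype.card R := by
        rw [← Finset.sum_filter, Finset.sum_const, nsmul_eq_mul]

theorem norm_quadraticGaussSum_stdAddChar_le {q : ℕ} [NeZero q] {a : ZMod q} (ha : IsUnit a)
    (b : ZMod q) : ‖quadraticGaussSum ZMod.stdAddChar a b‖ ≤ √(2 * q) := by
  refine Real.le_sqrt_of_sq_le
    ((norm_quadraticGaussSum_sq_le_s5 (ZMod.isPrimitive_stdAddChar q) ha b).trans ?_)
  have card_two_torsion := IsAddCyclic.card_nsmul_eq_zero_le (α := ZMod q) (n := 2) two_pos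
  simp only [nsmul_eq_mul, Nat.cast_ofNat] at card_two_torsion
  rw [ZMod.card]
  gcongr
  exact_mod_cast card_two_torsion

open scoped ZMod in
theorem dft_stdAddChar_sq {q : ℕ} [NeZero q] (a k : ZMod q) :
    𝓕 (fun r : ZMod q ↦ ZMod.stdAddChar (a * r ^ 2)) k =
      quadraticGaussSum ZMod.stdAddChar a (-k) := by
  simp only [ZMod.dft_apply, quadraticGaussSum, smul_eq_mul, ← AddChar.map_add_eq_mul]
  refine Finset.sum_congr rfl fun r _ ↦ ?_
  ring_nf

end QuadraticGaussSum

section ThetaPoisson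

open Complex

theorem tsum_int_eq_sum_zmod {E : Type*} [AddCommGroup E] [UniformSpace E] [IsUniformAddGroup E]
    [CompleteSpace E] [T2Space E] (q : ℕ) [NeZero q] {f : ℤ → E} (hf : Summable f) :
    ∑' m, f m = ∑ r : ZMod q, ∑' n : ℤ, f (n * q + r.val) := by
  let e : ZMod q × ℤ ≃ ℤ := ((ZMod.finEquiv q).symm.toEquiv.prodCongr (Equiv.refl ℤ)).trans
    ((Equiv.prodComm _ _).trans (Int.divModEquiv q).symm)
  have he (r : ZMod q) (n : ℤ) : e (r, n) = n * q + r.val := by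
    obtain _ | q := q
    · exact absurd rfl (NeZero.ne 0)
    · rfl
  have summable_e : Summable fun p ↦ f (e p) := e.summable_iff.mpr hf
  rw [← e.tsum_eq, summable_e.tsum_prod, tsum_fintype]
  simp only [he]

theorem neg_one_div_im_pos {τ : ℂ} (hτ : 0 < τ.im) : 0 < (-1 / τ).im := by
  rw [neg_div, one_div, ← inv_neg]
  exact UpperHalfPlane.im_inv_neg_coe_pos ⟨τ, hτ⟩

theorem exp_gaussian_eq_mul_jacobiTheta₂_term (z τ : ℂ) (n : ℤ) :
    cexp (-π * I * (z + n) ^ 2 / τ) =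
      cexp (-π * I * z ^ 2 / τ) * jacobiTheta₂_term n (-z / τ) (-1 / τ) := by
  rw [jacobiTheta₂_term, ← Complex.exp_add]
  congr 1
  ring

theorem jacobiTheta₂_eq_tsum_gaussian (z τ : ℂ) :
    jacobiTheta₂ z τ = 1 / (-I * τ) ^ (1 / 2 : ℂ) * ∑' n : ℤ, cexp (-π * I * (z + n) ^ 2 / τ) := by
  simp_rw [exp_gaussian_eq_mul_jacobiTheta₂_term]
  rw [tsum_mul_left, ← jacobiTheta₂, neg_div τ z, jacobiTheta₂_neg_left,
    jacobiTheta₂_functional_equation, mul_assoc]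

theorem summable_gaussian {τ : ℂ} (hτ : 0 < τ.im) {q : ℕ} (hq : q ≠ 0) (z : ℂ) :
    Summable fun n : ℤ ↦ cexp (-π * I * (z + n / q) ^ 2 / τ) := by
  have hqτ : 0 < (q ^ 2 * τ).im := by
    rw [← Nat.cast_pow, ← ofReal_natCast, im_ofReal_mul]
    positivity
  have h := ((summable_jacobiTheta₂_term_iff (-(q * z) / (q ^ 2 * τ)) _).mpr
    (neg_one_div_im_pos hqτ)).mul_left (cexp (-π * I * (q * z) ^ 2 / (q ^ 2 * τ)))
  simp_rw [← exp_gaussian_eq_mul_jacobiTheta₂_term] at h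
  refine h.congr fun n ↦ ?_
  have : τ ≠ 0 := by rintro rfl; simp at hτ
  congr 1
  field_simp

theorem stdAddChar_mul_jacobiTheta₂_term {q : ℕ} [NeZero q] (k m : ℤ) (z τ : ℂ) :
    ZMod.stdAddChar ((k * m : ℤ) : ZMod q) * jacobiTheta₂_term m z τ =
      jacobiTheta₂_term m (z + k / q) τ := by
  rw [ZMod.stdAddChar_coe, jacobiTheta₂_term, jacobiTheta₂_term, ← Complex.exp_add]
  push_cast
  ring_nf

open scoped ZMod in
theorem tsum_mul_jacobiTheta₂_term {q : ℕ} [NeZero q] (w : ZMod q → ℂ) {τ : ℂ} (hτ : 0 < τ.im)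
    (z : ℂ) :
    ∑' m : ℤ, w m * jacobiTheta₂_term m z τ =
      1 / (q * (-I * τ) ^ (1 / 2 : ℂ)) *
        ∑' ℓ : ℤ, 𝓕 w ℓ * cexp (-π * I * (z + ℓ / q) ^ 2 / τ) := by
  have inversion (m : ℤ) : w m * jacobiTheta₂_term m z τ =
      (q : ℂ)⁻¹ * ∑ k : ZMod q, 𝓕 w k * jacobiTheta₂_term m (z + k.val / q) τ := by
    conv_lhs => rw [← ZMod.dft.symm_apply_apply w, ZMod.invDFT_apply]
    rw [smul_eq_mul, mul_assoc, Finset.sum_mul]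
    congr 1
    refine Finset.sum_congr rfl fun k _ ↦ ?_
    have := stdAddChar_mul_jacobiTheta₂_term (q := q) k.val m z τ
    push_cast [ZMod.natCast_zmod_val] at this
    rw [← this, smul_eq_mul, mul_assoc, mul_left_comm]
  have summable_term (k : ZMod q) :
      Summable fun m : ℤ ↦ 𝓕 w k * jacobiTheta₂_term m (z + k.val / q) τ :=
    ((summable_jacobiTheta₂_term_iff _ _).mpr hτ).mul_left _
  have summable_dual : Summable fun ℓ : ℤ ↦ 𝓕 w ℓ * cexp (-π * I * (z + ℓ / q) ^ 2 / τ) := by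
    obtain ⟨B, hB⟩ := (Set.finite_range fun k ↦ ‖𝓕 w k‖).bddAbove
    refine .of_norm_bounded ((summable_gaussian hτ (NeZero.ne q) z).norm.mul_left B) fun ℓ ↦ ?_
    rw [norm_mul]
    gcongr
    exact hB (Set.mem_range_self (ℓ : ZMod q))
  have hq : (q : ℂ) ≠ 0 := NeZero.ne _
  simp_rw [inversion]
  rw [tsum_mul_left, Summable.tsum_finsetSum (fun k _ ↦ summable_term k),
    tsum_int_eq_sum_zmod q summable_dual, one_div, mul_inv, mul_assoc]
  congr 1
  rw [Finset.mul_sum]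
  refine Finset.sum_congr rfl fun k _ ↦ ?_
  rw [tsum_mul_left, ← jacobiTheta₂, jacobiTheta₂_eq_tsum_gaussian, mul_left_comm, one_div]
  simp_rw [← tsum_mul_left]
  refine tsum_congr fun n ↦ ?_
  push_cast [ZMod.natCast_self, ZMod.natCast_zmod_val]
  rw [mul_zero, zero_add, add_div, mul_div_cancel_right₀ _ hq, add_assoc, add_comm (n : ℂ)]

theorem jacobiTheta₂_rational_add {q : ℕ} [NeZero q] (a : ℤ) {τ : ℂ} (hτ : 0 < τ.im) (z : ℂ) :
    jacobiTheta₂ z (2 * (a / q) + τ) = 1 / (q * (-I * τ) ^ (1 / 2 : ℂ)) *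
      ∑' ℓ : ℤ, quadraticGaussSum ZMod.stdAddChar (a : ZMod q) (-ℓ) *
        cexp (-π * I * (z + ℓ / q) ^ 2 / τ) := by
  have periodic_term (m : ℤ) : jacobiTheta₂_term m z (2 * (a / q) + τ) =
      ZMod.stdAddChar (a * m ^ 2 : ZMod q) * jacobiTheta₂_term m z τ := by
    rw [← Int.cast_pow, ← Int.cast_mul, ZMod.stdAddChar_coe, jacobiTheta₂_term, jacobiTheta₂_term,
      ← Complex.exp_add]
    push_cast
    ring_nf
  have poisson := tsum_mul_jacobiTheta₂_term
    (fun r : ZMod q ↦ ZMod.stdAddChar (a * r ^ 2 : ZMod q)) hτ z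
  simpa only [jacobiTheta₂, periodic_term, dft_stdAddChar_sq] using poisson

theorem norm_jacobiTheta₂_rational_add_le {q : ℕ} [NeZero q] {a : ℤ} (haq : IsCoprime a q) {τ : ℂ}
    (hτ : 0 < τ.im) (z : ℂ) :
    ‖jacobiTheta₂ z (2 * (a / q) + τ)‖ ≤ √2 * (q : ℝ) ^ (-(1 : ℝ) / 2) * ‖τ‖ ^ (-(1 : ℝ) / 2) *
      ∑' ℓ : ℤ, ‖cexp (-π * I * (z + ℓ / q) ^ 2 / τ)‖ := by
  have hq : (0 : ℝ) < q := Nat.cast_pos.mpr (NeZero.pos q)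
  have isUnit_a := (ZMod.coe_int_isUnit_iff_isCoprime a q).mpr haq.symm
  have norm_prefactor : ‖1 / (q * (-I * τ) ^ (1 / 2 : ℂ))‖ =
      (q : ℝ)⁻¹ * ‖τ‖ ^ (-(1 : ℝ) / 2) := by
    rw [show (1 / 2 : ℂ) = ((1 / 2 : ℝ) : ℂ) by norm_num, norm_div, norm_mul, norm_cpow_real,
      norm_mul, norm_neg, norm_I, norm_one, norm_natCast, one_mul, one_div, mul_inv, neg_div,
      Real.rpow_neg (norm_nonneg _)]
  have norm_dual_sum_le : ‖∑' ℓ : ℤ, quadraticGaussSum ZMod.stdAddChar (a : ZMod q) (-ℓ) *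
      cexp (-π * I * (z + ℓ / q) ^ 2 / τ)‖ ≤
        √(2 * q) * ∑' ℓ : ℤ, ‖cexp (-π * I * (z + ℓ / q) ^ 2 / τ)‖ := by
    refine tsum_of_norm_bounded
      ((summable_gaussian hτ (NeZero.ne q) z).norm.hasSum.mul_left _) fun ℓ ↦ ?_
    rw [norm_mul]
    gcongr
    exact norm_quadraticGaussSum_stdAddChar_le isUnit_a _
  have inv_mul_sqrt : (q : ℝ)⁻¹ * √q = (q : ℝ) ^ (-(1 : ℝ) / 2) := by
    rw [Real.sqrt_eq_rpow, ← Real.rpow_neg_one, ← Real.rpow_add hq]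
    norm_num
  rw [jacobiTheta₂_rational_add a hτ, norm_mul, norm_prefactor, ← inv_mul_sqrt]
  refine (mul_le_mul_of_nonneg_left norm_dual_sum_le (by positivity)).trans_eq ?_
  rw [Real.sqrt_mul zero_le_two]
  ring

end ThetaPoisson

section WeylSum

open Complex

variable {ε : ℝ}

theorem two_mul_add_I_mul_im_pos (hε : 0 < ε) (t : ℝ) : 0 < (2 * ((t : ℂ) + I * ε)).im := by
  simpa using hε

theorem sHat_eq_prod_jacobiTheta₂ (hε : 0 < ε) {d : ℕ} (t : ℝ) (α : Fin d → ℝ) :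
    sHat ε t α = ∏ i, jacobiTheta₂ (-α i) (2 * (t + I * ε)) := by
  have summable_term (i : Fin d) :=
    ((summable_jacobiTheta₂_term_iff (-α i) _).mpr (two_mul_add_I_mul_im_pos hε t)).norm
  simp_rw [jacobiTheta₂, ← tsum_prod_pi summable_term, sHat, sFun, nsq, jacobiTheta₂_term]
  refine tsum_congr fun m ↦ ?_
  rw [← Complex.exp_sum, ← Complex.exp_add]
  push_cast
  simp_rw [Finset.sum_add_distrib, Finset.mul_sum, Finset.sum_mul]
  rw [add_comm]
  congr 2 <;> refine Finset.sum_congr rfl fun i _ ↦ ?_ <;> ring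

theorem norm_exp_gaussian_two_mul (hε : 0 < ε) (τ x y : ℝ) :
    ‖cexp (-π * I * (-x + y) ^ 2 / (2 * (τ + I * ε)))‖ =
      Real.exp (-(π / 2) * (x - y) ^ 2 / (ε + ε⁻¹ * τ ^ 2)) := by
  have rotate : -π * I * (-x + y) ^ 2 / (2 * (τ + I * ε)) =
      ((-(π / 2) * (x - y) ^ 2 : ℝ) : ℂ) * (I / (τ + I * ε)) := by
    push_cast
    rw [div_mul_eq_div_div]
    ring
  have re_I_div : (I / (τ + I * ε)).re = (ε + ε⁻¹ * τ ^ 2)⁻¹ := by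
    have : 0 < τ ^ 2 + ε ^ 2 := by positivity
    simp only [div_re, I_re, I_im, add_re, add_im, ofReal_re, ofReal_im, mul_re, mul_im,
      normSq_apply, zero_mul, mul_zero, one_mul, sub_self, add_zero, zero_add, zero_div]
    field_simp
    ring
  rw [Complex.norm_exp, rotate, re_ofReal_mul, re_I_div, ← div_eq_mul_inv]

theorem add_abs_le_norm_two_mul (ε τ : ℝ) : ε + |τ| ≤ ‖2 * ((τ : ℂ) + I * ε)‖ := by
  have hre := abs_re_le_norm ((τ : ℂ) + I * ε)
  have him := abs_im_le_norm ((τ : ℂ) + I * ε)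
  simp only [add_re, add_im, ofReal_re, ofReal_im, re_mul_ofReal, im_mul_ofReal, I_re, I_im,
    zero_mul, one_mul, add_zero, zero_add] at hre him
  rw [norm_mul, norm_ofNat]
  linarith [le_abs_self ε]

theorem norm_jacobiTheta₂_div_add_le (hε : 0 < ε) {q : ℕ} [NeZero q] {a : ℤ} (haq : IsCoprime a q)
    (τ x : ℝ) :
    ‖jacobiTheta₂ (-x) (2 * ((a / q + τ : ℝ) + I * ε))‖ ≤
      √2 * (q : ℝ) ^ (-(1 : ℝ) / 2) * (ε + |τ|) ^ (-(1 : ℝ) / 2) *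
        ∑' ℓ : ℤ, Real.exp (-(π / 2) * (x - ℓ / q) ^ 2 / (ε + ε⁻¹ * τ ^ 2)) := by
  have split_modulus : 2 * (((a / q + τ : ℝ) : ℂ) + I * ε) = 2 * (a / q) + 2 * (τ + I * ε) := by
    push_cast
    ring
  have norm_gaussian (ℓ : ℤ) := norm_exp_gaussian_two_mul hε τ x (ℓ / q)
  push_cast at norm_gaussian
  have h := norm_jacobiTheta₂_rational_add_le haq (two_mul_add_I_mul_im_pos hε τ) (-x)
  simp_rw [norm_gaussian, ← split_modulus] at h
  refine h.trans (mul_le_mul_of_nonneg_right ?_ (tsum_nonneg fun _ ↦ Real.exp_nonneg _))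
  gcongr ?_ * ?_
  exact Real.rpow_le_rpow_of_nonpos (by positivity) (add_abs_le_norm_two_mul ε τ) (by norm_num)

theorem summable_exp_neg_sq_div (hε : 0 < ε) {q : ℕ} (hq : q ≠ 0) (τ x : ℝ) :
    Summable fun ℓ : ℤ ↦ Real.exp (-(π / 2) * (x - ℓ / q) ^ 2 / (ε + ε⁻¹ * τ ^ 2)) := by
  refine (summable_gaussian (two_mul_add_I_mul_im_pos hε τ) hq (-x)).norm.congr fun ℓ ↦ ?_
  exact_mod_cast norm_exp_gaussian_two_mul hε τ x (ℓ / q)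

theorem tsum_exp_neg_sq_div_eq_prod (hε : 0 < ε) {q : ℕ} (hq : q ≠ 0) {d : ℕ} (τ : ℝ)
    (α : Fin d → ℝ) :
    ∑' ℓ : Fin d → ℤ,
        Real.exp (-(π / 2) * (∑ i, (α i - (ℓ i : ℝ) / q) ^ 2) / (ε + ε⁻¹ * τ ^ 2)) =
      ∏ i, ∑' ℓ : ℤ, Real.exp (-(π / 2) * (α i - ℓ / q) ^ 2 / (ε + ε⁻¹ * τ ^ 2)) := by
  rw [← tsum_prod_pi fun i ↦ (summable_exp_neg_sq_div hε hq τ (α i)).norm]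
  simp_rw [← Real.exp_sum, Finset.mul_sum, Finset.sum_div]

theorem gauss_sum_estimate_general {d : ℕ} (hε : 0 < ε) {a : ℤ} {q : ℕ} (hq : q ≠ 0)
    (haq : IsCoprime a q) (τ : ℝ) (α : Fin d → ℝ) :
    ‖sHat ε (a / q + τ) α‖ ≤
      √2 ^ d * (q : ℝ) ^ (-(d : ℝ) / 2) * (ε + |τ|) ^ (-(d : ℝ) / 2) *
        ∑' ℓ : Fin d → ℤ,
          Real.exp (-(π / 2) * (∑ i, (α i - (ℓ i : ℝ) / q) ^ 2) / (ε + ε⁻¹ * τ ^ 2)) := by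
  have : NeZero q := ⟨hq⟩
  have pow_rpow_neg_half {y : ℝ} (hy : 0 ≤ y) : (y ^ (-(1 : ℝ) / 2)) ^ d = y ^ (-(d : ℝ) / 2) := by
    rw [← Real.rpow_mul_natCast hy, div_mul_eq_mul_div, neg_one_mul]
  calc ‖sHat ε (a / q + τ) α‖
      = ∏ i, ‖jacobiTheta₂ (-α i) (2 * ((a / q + τ : ℝ) + I * ε))‖ := by
        rw [sHat_eq_prod_jacobiTheta₂ hε, norm_prod]
    _ ≤ ∏ i, √2 * (q : ℝ) ^ (-(1 : ℝ) / 2) * (ε + |τ|) ^ (-(1 : ℝ) / 2) *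
          ∑' ℓ : ℤ, Real.exp (-(π / 2) * (α i - ℓ / q) ^ 2 / (ε + ε⁻¹ * τ ^ 2)) := by
        gcongr with i
        exact norm_jacobiTheta₂_div_add_le hε haq τ (α i)
    _ = _ := by
        rw [Finset.prod_mul_distrib, ← tsum_exp_neg_sq_div_eq_prod hε hq, Finset.prod_const,
          Finset.card_univ, Fintype.card_fin, mul_pow, mul_pow, pow_rpow_neg_half q.cast_nonneg,
          pow_rpow_neg_half (by positivity)]

end WeylSum

/-- **Estimate (8)**: via Poisson summation and Gauss sums, on the Farey arc around
`a/q` one has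
`|ŝ_t(α)| ≤ C_d q^{-d/2} (ε+|τ|)^{-d/2} ∑_ℓ e^{-π/2 |α-ℓ/q|²/(ε+ε⁻¹τ²)}`. -/
theorem gauss_sum_estimate (d : ℕ) (hd : 1 ≤ d) :
    ∃ C : ℝ, 0 < C ∧ ∀ (k : ℕ) (a q : ℕ) (τ : ℝ) (α : Fin d → ℝ),
      1 ≤ a → a ≤ q → q ≤ 2 ^ k → Nat.Coprime a q →
      |τ| ≤ (2 : ℝ) ^ (-(k : ℤ)) / q →
      ‖sHat (d := d) (((2 : ℝ) ^ (2 * k))⁻¹) ((a : ℝ) / q + τ) α‖ ≤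
        C * (q : ℝ) ^ (-(d : ℝ) / 2) * (((2 : ℝ) ^ (2 * k))⁻¹ + |τ|) ^ (-(d : ℝ) / 2) *
          ∑' ℓ : Fin d → ℤ,
            Real.exp (-(π / 2) * (∑ i, (α i - (ℓ i : ℝ) / q) ^ 2) /
              (((2 : ℝ) ^ (2 * k))⁻¹ + ((2 : ℝ) ^ (2 * k)) * τ ^ 2)) := by
  refine ⟨√2 ^ d, by positivity, fun k a q τ α ha haq _ hcop _ ↦ ?_⟩
  simpa using gauss_sum_estimate_general (ε := ((2 : ℝ) ^ (2 * k))⁻¹) (by positivity)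
    (Nat.one_le_iff_ne_zero.mp (ha.trans haq)) hcop.isCoprime τ α
end
end
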